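/- arXiv:2203.02376 — 9 statements merged into one kernel-verified Lean document; each statement's English description precedes it below -/
import Mathlib

section
/- Let N ≥ 1 be an integer and μ > 0 a real number. Then the operator □ + μ·id on the space of N×N complex matrices is invertible, and the trace of its inverse equals Σ_{l=0}^{N−1} (2l+1)/(l(l+1)+μ). -/
open scoped BigOperators
open Matrix

noncomputable section

/-- The spin α = (N−1)/2. -/
def alphaN (N : ℕ) : ℝ := ((N : ℝ) - 1) / 2

/-- The raising operator J₊ of the spin-α irreducible representation of su(2) on ℂ^N,
    in the orthonormal weight basis |m⟩, m = α, α−1, …, −α (the basis vector of index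
    j : Fin N has weight m = α − j):  J₊|m⟩ = √(α(α+1) − m(m+1)) |m+1⟩. -/
def Jplus (N : ℕ) : Matrix (Fin N) (Fin N) ℂ :=
  Matrix.of fun i k =>
    if (i : ℕ) + 1 = (k : ℕ) then
      ((Real.sqrt (alphaN N * (alphaN N + 1)
        - (alphaN N - (k : ℕ)) * ((alphaN N - (k : ℕ)) + 1)) : ℝ) : ℂ)
    else 0

/-- The spin-α generators J₁, J₂, J₃ on ℂ^N:  J₃|m⟩ = m|m⟩ and
    J₁ ± iJ₂ = J₊/J₋ act as ladder operators, i.e. J₁ = (J₊ + J₋)/2,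
    J₂ = (J₊ − J₋)/(2i), with J₋ = J₊†. -/
def Jspin (N : ℕ) : Fin 3 → Matrix (Fin N) (Fin N) ℂ :=
  ![((2 : ℂ))⁻¹ • (Jplus N + (Jplus N)ᴴ),
    ((2 : ℂ) * Complex.I)⁻¹ • (Jplus N - (Jplus N)ᴴ),
    Matrix.diagonal fun j : Fin N => ((alphaN N - (j : ℕ) : ℝ) : ℂ)]

/-- The matrix Laplacian □Φ = Σ_{a=1}^{3} [J_a, [J_a, Φ]] as a linear endomorphism
    of the space of N×N complex matrices. -/
def boxOp (N : ℕ) : Module.End ℂ (Matrix (Fin N) (Fin N) ℂ) :=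
  ∑ a : Fin 3,
    (LinearMap.mulLeft ℂ (Jspin N a) - LinearMap.mulRight ℂ (Jspin N a)) ∘ₗ
      (LinearMap.mulLeft ℂ (Jspin N a) - LinearMap.mulRight ℂ (Jspin N a))

attribute [local instance] LieRing.ofAssociativeRing

theorem Jp_apply (N : ℕ) (i k : Fin N) : Jplus N i k =
    if (i : ℕ) + 1 = (k : ℕ) then ((Real.sqrt ((k : ℝ) * (N - k)) : ℝ) : ℂ) else 0 := by
  simp only [Jplus, Matrix.of_apply, alphaN]
  congr 4
  ring

theorem sqrt_sq_c (N k : ℕ) (h : k ≤ N) :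
    ((Real.sqrt ((k : ℝ) * (N - k)) : ℝ) : ℂ) * ((Real.sqrt ((k : ℝ) * (N - k)) : ℝ) : ℂ)
      = (k : ℂ) * (N - k) := by
  have h' : (k : ℝ) ≤ N := by exact_mod_cast h
  rw [← Complex.ofReal_mul, Real.mul_self_sqrt (mul_nonneg (Nat.cast_nonneg k) (by linarith))]
  push_cast; rfl

theorem Jpm (N : ℕ) : Jplus N * (Jplus N)ᴴ =
    Matrix.diagonal fun j : Fin N => ((j : ℂ) + 1) * (N - (j + 1)) := by
  ext i k
  rw [Matrix.mul_apply, Matrix.diagonal_apply]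
  simp only [Matrix.conjTranspose_apply, Jp_apply]
  split_ifs with hik
  · subst hik
    by_cases hi : (i : ℕ) + 1 < N
    · rw [Finset.sum_eq_single (⟨i + 1, hi⟩ : Fin N)]
      · simp only [if_true]
        have := sqrt_sq_c N (i + 1) hi.le
        simpa using this
      · intro b _ hb
        rw [if_neg (fun h => hb (Fin.ext h.symm)), zero_mul]
      · simp
    · rw [Finset.sum_eq_zero]
      · have : (N : ℂ) = i + 1 := by
          have := i.2
          exact_mod_cast (by omega : N = (i : ℕ) + 1)
        rw [this]; ring
      · intro b _
        rw [if_neg (by have := b.2; omega), zero_mul]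
  · apply Finset.sum_eq_zero
    intro b _
    by_cases h1 : (i : ℕ) + 1 = b
    · rw [if_neg (c := (k : ℕ) + 1 = b) (fun h => hik (Fin.ext (by omega)))]; simp
    · rw [if_neg h1, zero_mul]

theorem Jmp (N : ℕ) : (Jplus N)ᴴ * Jplus N =
    Matrix.diagonal fun j : Fin N => (j : ℂ) * (N - j) := by
  ext i k
  rw [Matrix.mul_apply, Matrix.diagonal_apply]
  simp only [Matrix.conjTranspose_apply, Jp_apply]
  split_ifs with hik
  · subst hik
    rcases Nat.eq_zero_or_pos (i : ℕ) with hi | hi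
    · rw [Finset.sum_eq_zero]
      · simp [hi]
      · intro b _
        rw [if_neg (by omega), mul_zero]
    · rw [Finset.sum_eq_single (⟨i - 1, by omega⟩ : Fin N)]
      · have h : (i : ℕ) - 1 + 1 = i := by omega
        simp only [h, if_true]
        have := sqrt_sq_c N i i.2.le
        simpa using this
      · intro b _ hb
        rw [if_neg (fun h => hb (Fin.ext (by simp; omega))), mul_zero]
      · simp
  · apply Finset.sum_eq_zero
    intro b _
    by_cases h1 : (b : ℕ) + 1 = i
    · rw [if_neg (c := (b : ℕ) + 1 = k) (fun h => hik (Fin.ext (by omega)))]; simp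
    · rw [if_neg h1]; simp

/-- The Cartan element `2 J₃`. -/
def Hh (N : ℕ) : Matrix (Fin N) (Fin N) ℂ :=
  Matrix.diagonal fun j : Fin N => ((N : ℂ) - 1 - 2 * j)

theorem J3_eq (N : ℕ) : Jspin N 2 = (2 : ℂ)⁻¹ • Hh N := by
  ext i k
  simp only [Jspin, Hh, Matrix.cons_val, Matrix.smul_apply, Matrix.diagonal_apply, alphaN]
  split_ifs
  · push_cast; simp only [smul_eq_mul]; ring
  · simp

theorem lie_ef (N : ℕ) : ⁅Jplus N, (Jplus N)ᴴ⁆ = Hh N := by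
  rw [Ring.lie_def, Jpm, Jmp, Matrix.diagonal_sub, Hh]
  congr 1; ext j; ring

theorem lie_he (N : ℕ) : ⁅Hh N, Jplus N⁆ = 2 • Jplus N := by
  rw [Ring.lie_def]
  ext i k
  simp only [Hh, Matrix.sub_apply, Matrix.diagonal_mul, Matrix.mul_diagonal, Matrix.smul_apply,
    Jp_apply]
  split_ifs with h
  · have : (k : ℂ) = i + 1 := by exact_mod_cast h.symm
    rw [this]; simp only [nsmul_eq_mul]; push_cast; ring
  · simp

theorem lie_hf (N : ℕ) : ⁅Hh N, (Jplus N)ᴴ⁆ = -(2 • (Jplus N)ᴴ) := by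
  rw [Ring.lie_def]
  ext i k
  simp only [Hh, Matrix.sub_apply, Matrix.diagonal_mul, Matrix.mul_diagonal, Matrix.smul_apply,
    Matrix.neg_apply, Matrix.conjTranspose_apply, Jp_apply]
  split_ifs with h
  · have : (i : ℂ) = k + 1 := by exact_mod_cast h.symm
    rw [this]; simp only [nsmul_eq_mul]; push_cast; ring
  · simp

theorem Jp_pow_row (N : ℕ) (hN : 0 < N) (l : ℕ) (hl : l < N) :
    ∃ c : ℂ, c ≠ 0 ∧ ∀ k : Fin N, (Jplus N ^ l) ⟨0, hN⟩ k = if (k : ℕ) = l then c else 0 := by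
  induction l with
  | zero =>
    refine ⟨1, one_ne_zero, fun k => ?_⟩
    rw [pow_zero, Matrix.one_apply]
    congr 1
    simp [Fin.ext_iff, eq_comm]
  | succ l ih =>
    obtain ⟨c, hc, h⟩ := ih (by omega)
    refine ⟨c * ((Real.sqrt (((l + 1 : ℕ) : ℝ) * (N - (l + 1 : ℕ))) : ℝ) : ℂ), ?_, fun k => ?_⟩
    · apply mul_ne_zero hc
      rw [Complex.ofReal_ne_zero]
      apply (Real.sqrt_pos.2 _).ne'
      have : ((l + 1 : ℕ) : ℝ) < N := by exact_mod_cast hl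
      apply mul_pos
      · positivity
      · linarith
    · rw [pow_succ, Matrix.mul_apply, Finset.sum_eq_single (⟨l, by omega⟩ : Fin N)]
      · rw [h, Jp_apply]
        simp only [if_true]
        by_cases hk : (k : ℕ) = l + 1
        · rw [if_pos hk.symm, if_pos hk, hk]
        · rw [if_neg (Ne.symm hk), if_neg hk, mul_zero]
      · intro b _ hb
        rw [h, if_neg (fun h => hb (Fin.ext h)), zero_mul]
      · simp

theorem Jp_pow_ne (N : ℕ) (l : ℕ) (hl : l < N) : Jplus N ^ l ≠ 0 := by
  obtain ⟨c, hc, h⟩ := Jp_pow_row N (by omega) l hl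
  intro h0
  have := h ⟨l, hl⟩
  rw [h0] at this
  simp at this
  exact hc this.symm

theorem lie_h_pow (N l : ℕ) : ⁅Hh N, Jplus N ^ l⁆ = (2 * (l : ℂ)) • Jplus N ^ l := by
  induction l with
  | zero => simp [Ring.lie_def]
  | succ l ih =>
    have h1 := lie_he N
    rw [Ring.lie_def] at *
    have : Hh N * Jplus N ^ (l + 1) - Jplus N ^ (l + 1) * Hh N =
      (Hh N * Jplus N ^ l - Jplus N ^ l * Hh N) * Jplus N
        + Jplus N ^ l * (Hh N * Jplus N - Jplus N * Hh N) := by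
      rw [pow_succ]; noncomm_ring
    rw [this, ih, h1, pow_succ, smul_mul_assoc, mul_smul_comm, ← Nat.cast_smul_eq_nsmul ℂ,
      ← add_smul]
    push_cast; ring_nf

theorem box_apply (N : ℕ) (Φ : Matrix (Fin N) (Fin N) ℂ) :
    boxOp N Φ = (4 : ℂ)⁻¹ • ⁅Hh N, ⁅Hh N, Φ⁆⁆ +
      (2 : ℂ)⁻¹ • (⁅Jplus N, ⁅(Jplus N)ᴴ, Φ⁆⁆ + ⁅(Jplus N)ᴴ, ⁅Jplus N, Φ⁆⁆) := by
  have hb : boxOp N Φ = ∑ a : Fin 3, ⁅Jspin N a, ⁅Jspin N a, Φ⁆⁆ := by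
    simp [boxOp, Ring.lie_def]
  have h0 : Jspin N 0 = (2 : ℂ)⁻¹ • (Jplus N + (Jplus N)ᴴ) := rfl
  have h1 : Jspin N 1 = ((2 : ℂ) * Complex.I)⁻¹ • (Jplus N - (Jplus N)ᴴ) := rfl
  rw [hb, Fin.sum_univ_three, J3_eq, h0, h1]
  simp only [smul_lie, lie_smul, add_lie, sub_lie, lie_add, lie_sub, smul_add, smul_sub, smul_smul]
  have e1 : ((2 : ℂ) * Complex.I)⁻¹ * ((2 : ℂ) * Complex.I)⁻¹ = -(4 : ℂ)⁻¹ := by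
    rw [← mul_inv, show (2 : ℂ) * Complex.I * (2 * Complex.I) = 4 * (Complex.I * Complex.I) by ring,
      Complex.I_mul_I]; norm_num
  rw [e1]
  have e2 : (2 : ℂ)⁻¹ * (2 : ℂ)⁻¹ = 4⁻¹ := by norm_num
  rw [e2]
  module

/-- eigenvectors -/
def psi (N l n : ℕ) : Matrix (Fin N) (Fin N) ℂ :=
  ((LieModule.toEnd ℂ (Matrix (Fin N) (Fin N) ℂ) (Matrix (Fin N) (Fin N) ℂ) (Jplus N)ᴴ) ^ n)
    (Jplus N ^ l)

theorem psi_succ (N l n : ℕ) : ⁅(Jplus N)ᴴ, psi N l n⁆ = psi N l (n + 1) := by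
  simp [psi, pow_succ']

theorem lie_h_psi (N l n : ℕ) : ⁅Hh N, psi N l n⁆ = (2 * (l : ℂ) - 2 * n) • psi N l n := by
  induction n with
  | zero => simp [psi, lie_h_pow]
  | succ n ih =>
    rw [← psi_succ, leibniz_lie, ih, lie_hf, lie_smul, neg_lie, nsmul_lie]
    push_cast
    module

theorem lie_e_psi (N l n : ℕ) :
    ⁅Jplus N, psi N l (n + 1)⁆ = (((n : ℂ) + 1) * (2 * l - n)) • psi N l n := by
  induction n with
  | zero =>
    rw [← psi_succ, leibniz_lie, lie_ef, lie_h_psi]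
    have : ⁅Jplus N, psi N l 0⁆ = 0 := by
      simp [psi, Ring.lie_def, ← pow_succ, ← pow_succ']
    rw [this]; simp
  | succ n ih =>
    rw [← psi_succ, leibniz_lie, lie_ef, lie_h_psi, ih, lie_smul, psi_succ]
    push_cast
    module

theorem psi_ne (N l n : ℕ) (hl : l < N) (hn : n ≤ 2 * l) : psi N l n ≠ 0 := by
  induction n with
  | zero => simpa [psi] using Jp_pow_ne N l hl
  | succ n ih =>
    intro h
    have := lie_e_psi N l n
    rw [h, lie_zero, eq_comm, smul_eq_zero, mul_eq_zero, sub_eq_zero] at this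
    rcases this with (h1 | h1) | h1
    · exact absurd h1 (by exact_mod_cast Nat.succ_ne_zero n)
    · have : 2 * l = n := by exact_mod_cast h1
      omega
    · exact ih (by omega) h1

theorem box_psi (N l n : ℕ) : boxOp N (psi N l n) = ((l : ℂ) * (l + 1)) • psi N l n := by
  rw [box_apply, lie_h_psi, lie_smul, lie_h_psi, psi_succ, lie_e_psi]
  cases n with
  | zero =>
    have : ⁅Jplus N, psi N l 0⁆ = 0 := by
      simp [psi, Ring.lie_def, ← pow_succ, ← pow_succ']
    rw [this, lie_zero]
    push_cast
    module
  | succ n =>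
    rw [lie_e_psi, lie_smul, psi_succ]
    push_cast
    module

/-- index type of the eigenbasis -/
abbrev Idx (N : ℕ) := Σ l : Fin N, Fin (2 * (l : ℕ) + 1)

theorem psi_indep (N : ℕ) : LinearIndependent ℂ (fun i : Idx N => psi N i.1 i.2) := by
  refine Module.End.eigenvectors_linearIndependent' (ι := Idx N)
    (boxOp N + Complex.I • LieModule.toEnd ℂ (Matrix (Fin N) (Fin N) ℂ)
      (Matrix (Fin N) (Fin N) ℂ) (Hh N))
    (fun i => ((i.1 : ℕ) : ℂ) * ((i.1 : ℕ) + 1) + Complex.I * (2 * ((i.1 : ℕ) : ℂ) - 2 * (i.2 : ℕ)))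
    ?_ _ ?_
  · rintro ⟨⟨l, hl⟩, ⟨n, hn⟩⟩ ⟨⟨l', hl'⟩, ⟨n', hn'⟩⟩ h
    have hre := congrArg Complex.re h
    have him := congrArg Complex.im h
    simp at hre him
    have hre' : l * (l + 1) = l' * (l' + 1) := by exact_mod_cast hre
    have hll : l = l' := by nlinarith
    subst hll
    have : n = n' := by
      have : (n : ℝ) = n' := by linarith
      exact_mod_cast this
    subst this
    rfl
  · rintro ⟨⟨l, hl⟩, ⟨n, hn⟩⟩
    refine ⟨Module.End.mem_eigenspace_iff.2 ?_, psi_ne N l n hl (by simp at hn; omega)⟩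
    simp [box_psi, lie_h_psi, add_smul, mul_smul]

theorem card_idx (N : ℕ) : Fintype.card (Idx N) = N * N := by
  rw [Fintype.card_sigma]
  simp only [Fintype.card_fin]
  rw [Fin.sum_univ_eq_sum_range (fun l => 2 * l + 1) N]
  induction N with
  | zero => rfl
  | succ n ih => rw [Finset.sum_range_succ, ih]; ring

theorem boxOp_resolvent_trace (N : ℕ) (hN : 1 ≤ N) (μ : ℝ) (hμ : 0 < μ) :
    ∃ g : Module.End ℂ (Matrix (Fin N) (Fin N) ℂ),
      (boxOp N + (μ : ℂ) • (1 : Module.End ℂ (Matrix (Fin N) (Fin N) ℂ))) * g = 1 ∧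
      g * (boxOp N + (μ : ℂ) • (1 : Module.End ℂ (Matrix (Fin N) (Fin N) ℂ))) = 1 ∧
      LinearMap.trace ℂ (Matrix (Fin N) (Fin N) ℂ) g
        = ∑ l ∈ Finset.range N,
            (2 * (l : ℂ) + 1) / ((l : ℂ) * ((l : ℂ) + 1) + (μ : ℂ)) := by
  have : Nonempty (Idx N) := ⟨⟨⟨0, hN⟩, ⟨0, by simp⟩⟩⟩
  let b : Module.Basis (Idx N) ℂ (Matrix (Fin N) (Fin N) ℂ) :=
    basisOfLinearIndependentOfCardEqFinrank (psi_indep N) (by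
      rw [card_idx, Module.finrank_matrix]; simp)
  have hb : ∀ i, b i = psi N i.1 i.2 := fun i => by simp [b]
  let ev : ℕ → ℂ := fun l => (l : ℂ) * ((l : ℂ) + 1) + (μ : ℂ)
  have hev : ∀ l, ev l ≠ 0 := by
    intro l h
    have h2 : (l : ℝ) * (l + 1) + μ = 0 := by simp only [ev] at h; exact_mod_cast h
    have : 0 ≤ (l : ℝ) * (l + 1) := by positivity
    linarith
  have hbox : ∀ i, (boxOp N + (μ : ℂ) • (1 : Module.End ℂ (Matrix (Fin N) (Fin N) ℂ))) (b i)
      = ev i.1 • b i := by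
    intro i
    rw [hb]
    simp [box_psi, ev, add_smul]
  let g : Module.End ℂ (Matrix (Fin N) (Fin N) ℂ) :=
    b.constr ℂ (fun i => (ev i.1)⁻¹ • b i)
  have hg : ∀ i, g (b i) = (ev i.1)⁻¹ • b i := fun i => b.constr_basis ℂ _ i
  refine ⟨g, b.ext fun i => ?_, b.ext fun i => ?_, ?_⟩
  · rw [Module.End.mul_apply, hg, map_smul, hbox, smul_smul, inv_mul_cancel₀ (hev _), one_smul]; rfl
  · rw [Module.End.mul_apply, hbox, map_smul, hg, smul_smul, mul_inv_cancel₀ (hev _), one_smul]; rfl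
  · rw [LinearMap.trace_eq_matrix_trace ℂ b, Matrix.trace]
    have : ∀ i : Idx N, (LinearMap.toMatrix b b g).diag i = (ev i.1)⁻¹ := by
      intro i
      rw [Matrix.diag_apply, LinearMap.toMatrix_apply, hg]
      simp
    rw [Finset.sum_congr rfl (fun i _ => this i), Fintype.sum_sigma]
    simp only [Finset.sum_const, Finset.card_univ, Fintype.card_fin]
    rw [Fin.sum_univ_eq_sum_range (fun l => (2 * l + 1) • (ev l)⁻¹) N]
    refine Finset.sum_congr rfl fun l _ => ?_
    rw [nsmul_eq_mul, div_eq_mul_inv]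
    push_cast
    rfl
end
end

section
/- Let n ≥ 1, let ξ = v(θ,φ)^{⊗n} and η = v(θ',φ')^{⊗n}, let x = x(θ,φ) and y = x(θ',φ') be the corresponding points of S², and let Ψ = |ξ⟩⟨η| be the rank-one operator z ↦ ⟨η, z⟩ ξ on (ℂ²)^{⊗n}. Then Σ_{a=1}^{3} ‖[J_a, Ψ]‖_F² = n + (n²/4)·|x−y|², where ‖·‖_F is the Frobenius (Hilbert–Schmidt) norm and |x−y| is the Euclidean distance in ℝ³. (This is the exact form of the statement that string modes are approximate eigenstates of the matrix Laplacian with energy E_{xy} given by the squared string length plus the intrinsic quantum scale.) -/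
open scoped BigOperators ComplexConjugate
open Matrix

noncomputable section

/-- The three Pauli matrices acting on ℂ². -/
def pauli : Fin 3 → Matrix (Fin 2) (Fin 2) ℂ :=
  ![!![0, 1; 1, 0], !![0, -Complex.I; Complex.I, 0], !![1, 0; 0, -1]]

/-- The coherent spinor v(θ,φ) = (cos(θ/2), e^{iφ} sin(θ/2)) ∈ ℂ². -/
def vcoh (θ φ : ℝ) : Fin 2 → ℂ :=
  ![(Real.cos (θ / 2) : ℂ), Complex.exp (Complex.I * (φ : ℂ)) * (Real.sin (θ / 2) : ℂ)]

/-- The point x(θ,φ) = (sin θ cos φ, sin θ sin φ, cos θ) ∈ S² ⊂ ℝ³. -/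
def xpt (θ φ : ℝ) : Fin 3 → ℝ :=
  ![Real.sin θ * Real.cos φ, Real.sin θ * Real.sin φ, Real.cos θ]

/-- The n-th tensor power u^{⊗n} of u ∈ ℂ², realized concretely as the function
    (Fin n → Fin 2) → ℂ, f ↦ ∏ i, u (f i). -/
def tpow (n : ℕ) (u : Fin 2 → ℂ) : (Fin n → Fin 2) → ℂ :=
  fun f => ∏ i, u (f i)

/-- The standard Hermitian inner product (antilinear in the first argument). -/
def cinner {ι : Type} [Fintype ι] (ξ η : ι → ℂ) : ℂ :=
  ∑ f, conj (ξ f) * η f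

/-- The angular momentum operator J_a = Σ_i 1⊗…⊗(σ_a/2)⊗…⊗1 on (ℂ²)^{⊗n},
    as a matrix acting (via `Matrix.mulVec`) on the concrete model
    (Fin n → Fin 2) → ℂ of (ℂ²)^{⊗n}. -/
def Jmat (n : ℕ) (a : Fin 3) : Matrix (Fin n → Fin 2) (Fin n → Fin 2) ℂ :=
  Matrix.of fun f g => ∑ i : Fin n, ∑ k : Fin 2,
    (pauli a (f i) k / 2) * (if Function.update f i k = g then 1 else 0)

/-- The rank-one string mode Ψ = |ξ⟩⟨η| with ξ = v(θ,φ)^{⊗n}, η = v(θ',φ')^{⊗n},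
    as a matrix: z ↦ ⟨η, z⟩ ξ. -/
def stringMode (n : ℕ) (θ φ θ' φ' : ℝ) : Matrix (Fin n → Fin 2) (Fin n → Fin 2) ℂ :=
  Matrix.of fun f g => tpow n (vcoh θ φ) f * conj (tpow n (vcoh θ' φ') g)

/-- product tensor -/
def ptens (n : ℕ) (p : Fin n → Fin 2 → ℂ) : (Fin n → Fin 2) → ℂ :=
  fun f => ∏ i, p i (f i)

lemma cinner_ptens (n : ℕ) (p q : Fin n → Fin 2 → ℂ) :
    cinner (ptens n p) (ptens n q) = ∏ i, cinner (p i) (q i) := by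
  unfold cinner ptens
  rw [Finset.prod_univ_sum]
  simp [Finset.prod_mul_distrib]

lemma Jmat_apply (n : ℕ) (a : Fin 3) (f g : Fin n → Fin 2) :
    Jmat n a f g = ∑ i, pauli a (f i) (g i) / 2 *
      (if Function.update f i (g i) = g then 1 else 0) := by
  unfold Jmat
  simp only [Matrix.of_apply]
  refine Finset.sum_congr rfl fun i _ => ?_
  rw [Finset.sum_eq_single (g i)]
  · intro k _ hk
    rw [if_neg, mul_zero]
    intro h
    apply hk
    rw [← h]; simp
  · simp

lemma conj_two_eq : (conj (2 : ℂ)) = 2 := map_ofNat _ 2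

lemma pauli_conj (a : Fin 3) (k l : Fin 2) : conj (pauli a k l) = pauli a l k := by
  fin_cases a <;> fin_cases k <;> fin_cases l <;> simp [pauli]

lemma update_iff {n : ℕ} (f g : Fin n → Fin 2) (i : Fin n) :
    Function.update f i (g i) = g ↔ Function.update g i (f i) = f := by
  rw [Function.update_eq_iff, Function.update_eq_iff]
  constructor <;> (rintro ⟨-, h⟩; exact ⟨rfl, fun x hx => (h x hx).symm⟩)

lemma Jmat_conj (n : ℕ) (a : Fin 3) (f g : Fin n → Fin 2) :
    conj (Jmat n a f g) = Jmat n a g f := by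
  rw [Jmat_apply, Jmat_apply, map_sum]
  refine Finset.sum_congr rfl fun i _ => ?_
  rw [map_mul, map_div₀, pauli_conj]
  simp only [update_iff f g i]
  split_ifs <;> simp [conj_two_eq]

/-- half Pauli applied to spinor -/
def hp (a : Fin 3) (u : Fin 2 → ℂ) : Fin 2 → ℂ := fun l => ∑ k, pauli a l k / 2 * u k

lemma Jmat_mulVec (n : ℕ) (a : Fin 3) (u : Fin 2 → ℂ) (f : Fin n → Fin 2) :
    ∑ g, Jmat n a f g * tpow n u g
      = ∑ i, ptens n (Function.update (fun _ => u) i (hp a u)) f := by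
  unfold Jmat
  simp only [Matrix.of_apply, Finset.sum_mul]
  rw [Finset.sum_comm]
  refine Finset.sum_congr rfl fun i _ => ?_
  rw [Finset.sum_comm]
  simp only [mul_ite, mul_one, mul_zero, ite_mul, zero_mul, Finset.sum_ite_eq, Finset.mem_univ,
    if_true]
  unfold tpow ptens
  rw [Fintype.prod_eq_mul_prod_compl i]
  simp only [Function.update_self, hp, Finset.sum_mul]
  refine Finset.sum_congr rfl fun k _ => ?_
  rw [Fintype.prod_eq_mul_prod_compl i, Function.update_self, mul_assoc]
  congr 2
  refine Finset.prod_congr rfl fun j hj => ?_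
  have : j ≠ i := by simpa using hj
  simp [Function.update_of_ne this]

lemma cinner_sum_left {ι κ : Type} [Fintype ι] [Fintype κ] (F : κ → ι → ℂ) (η : ι → ℂ) :
    cinner (fun f => ∑ k, F k f) η = ∑ k, cinner (F k) η := by
  unfold cinner
  simp only [map_sum, Finset.sum_mul]
  rw [Finset.sum_comm]

lemma cinner_sum_right {ι κ : Type} [Fintype ι] [Fintype κ] (F : κ → ι → ℂ) (η : ι → ℂ) :
    cinner η (fun f => ∑ k, F k f) = ∑ k, cinner η (F k) := by
  unfold cinner
  simp only [Finset.mul_sum]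
  rw [Finset.sum_comm]

/-- J applied to a tensor power -/
def Jv (n : ℕ) (a : Fin 3) (u : Fin 2 → ℂ) : (Fin n → Fin 2) → ℂ :=
  fun f => ∑ i, ptens n (Function.update (fun _ => u) i (hp a u)) f

lemma tpow_eq (n : ℕ) (u : Fin 2 → ℂ) : tpow n u = ptens n (fun _ => u) := rfl

lemma cinner_tpow_self (n : ℕ) (u : Fin 2 → ℂ) (hu : cinner u u = 1) :
    cinner (tpow n u) (tpow n u) = 1 := by
  rw [tpow_eq, cinner_ptens]; simp [hu]

lemma cinner_tpow_Jv (n : ℕ) (a : Fin 3) (u : Fin 2 → ℂ) (hu : cinner u u = 1) :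
    cinner (tpow n u) (Jv n a u) = n * cinner u (hp a u) := by
  unfold Jv
  rw [cinner_sum_right]
  rw [Finset.sum_congr rfl (g := fun _ => cinner u (hp a u))]
  · simp
  intro i _
  rw [tpow_eq, cinner_ptens, Fintype.prod_eq_mul_prod_compl i, Finset.prod_eq_one]
  · simp
  · intro j hj
    have : j ≠ i := by simpa using hj
    simp [Function.update_of_ne this, hu]

lemma cinner_Jv_Jv (n : ℕ) (a : Fin 3) (u : Fin 2 → ℂ) (hu : cinner u u = 1) :
    cinner (Jv n a u) (Jv n a u) = n * (cinner (hp a u) (hp a u) +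
      (n - 1) * (cinner (hp a u) u * cinner u (hp a u))) := by
  unfold Jv
  rw [cinner_sum_left]
  rw [Finset.sum_congr rfl (g := fun _ => cinner (hp a u) (hp a u) +
      (n - 1) * (cinner (hp a u) u * cinner u (hp a u)))]
  · simp [mul_add]
  intro i _
  rw [cinner_sum_right, Fintype.sum_eq_add_sum_compl i]
  congr 1
  · rw [cinner_ptens, Fintype.prod_eq_mul_prod_compl i, Finset.prod_eq_one]
    · simp
    · intro j hj
      have : j ≠ i := by simpa using hj
      simp [Function.update_of_ne this, hu]
  · rw [Finset.sum_congr rfl (g := fun _ => cinner (hp a u) u * cinner u (hp a u))]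
    · have : 1 ≤ n := by have := i.2; omega
      simp [Finset.card_compl, Nat.cast_sub this]
    intro j hj
    have hji : j ≠ i := by simpa using hj
    rw [cinner_ptens, Fintype.prod_eq_mul_prod_compl i,
      ← Finset.mul_prod_erase _ _ hj, Finset.prod_eq_one]
    · simp [Function.update_of_ne hji, Function.update_of_ne hji.symm]
    · intro k hk
      simp only [Finset.mem_erase, Finset.mem_compl, Finset.mem_singleton] at hk
      simp [Function.update_of_ne hk.1, Function.update_of_ne hk.2, hu]

lemma exp_form (φ : ℝ) : Complex.exp (Complex.I * (φ : ℂ)) =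
    (Real.cos φ : ℂ) + (Real.sin φ : ℂ) * Complex.I := by
  rw [mul_comm, Complex.exp_mul_I]; simp

lemma vcoh_self (θ φ : ℝ) : cinner (vcoh θ φ) (vcoh θ φ) = 1 := by
  have h1 := Real.sin_sq_add_cos_sq (θ / 2)
  have h2 := Real.sin_sq_add_cos_sq φ
  simp only [cinner, vcoh, exp_form, Fin.sum_univ_two]
  apply Complex.ext <;> simp [-Complex.ofReal_cos, -Complex.ofReal_sin] <;> grind

lemma vcoh_hp (a : Fin 3) (θ φ : ℝ) :
    cinner (vcoh θ φ) (hp a (vcoh θ φ)) = ((xpt θ φ a / 2 : ℝ) : ℂ) := by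
  have h1 := Real.sin_sq_add_cos_sq (θ / 2)
  have h2 := Real.sin_sq_add_cos_sq φ
  have h3 : Real.sin θ = 2 * Real.sin (θ / 2) * Real.cos (θ / 2) := by
    rw [← Real.sin_two_mul]; congr 1; ring
  have h4 : Real.cos θ = 2 * (Real.cos (θ / 2) * Real.cos (θ / 2)) - 1 := by
    rw [← sq, ← Real.cos_two_mul]; congr 1; ring
  simp only [cinner, vcoh, hp, xpt, exp_form, Fin.sum_univ_two, h3, h4]
  fin_cases a <;> apply Complex.ext <;>
    simp [pauli, -Complex.ofReal_cos, -Complex.ofReal_sin] <;> grind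

lemma hp_vcoh (a : Fin 3) (θ φ : ℝ) :
    cinner (hp a (vcoh θ φ)) (vcoh θ φ) = ((xpt θ φ a / 2 : ℝ) : ℂ) := by
  have h := congrArg conj (vcoh_hp a θ φ)
  rw [Complex.conj_ofReal] at h
  rw [← h]
  simp [cinner, mul_comm]

lemma hp_hp (a : Fin 3) (u : Fin 2 → ℂ) : cinner (hp a u) (hp a u) = cinner u u / 4 := by
  simp only [cinner, hp, Fin.sum_univ_two]
  fin_cases a <;> simp [pauli, conj_two_eq] <;> ring_nf <;> simp <;> ring

lemma comm_norm {ι : Type} [Fintype ι] (A B ξ η : ι → ℂ) :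
    ((∑ f, ∑ g, ‖A f * conj (η g) - ξ f * conj (B g)‖ ^ 2 : ℝ) : ℂ)
      = cinner A A * cinner η η + cinner ξ ξ * cinner B B
        - cinner ξ A * cinner η B - cinner A ξ * cinner B η := by
  simp only [cinner, Finset.sum_mul_sum, ← Finset.sum_add_distrib, ← Finset.sum_sub_distrib]
  push_cast
  refine Finset.sum_congr rfl fun f _ => Finset.sum_congr rfl fun g _ => ?_
  rw [← Complex.conj_mul']
  simp only [map_sub, map_mul, Complex.conj_conj]
  ring

lemma cinner_conj {ι : Type} [Fintype ι] (ξ η : ι → ℂ) : conj (cinner ξ η) = cinner η ξ := by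
  simp [cinner, mul_comm]

lemma per_axis (n : ℕ) (a : Fin 3) (θ φ θ' φ' : ℝ) :
    ∑ f, ∑ g,
        ‖(Jmat n a * stringMode n θ φ θ' φ' - stringMode n θ φ θ' φ' * Jmat n a) f g‖ ^ 2
      = (n : ℝ) * (1 / 4 + (n - 1) * (xpt θ φ a / 2) ^ 2)
        + n * (1 / 4 + (n - 1) * (xpt θ' φ' a / 2) ^ 2)
        - 2 * (n * (xpt θ φ a / 2)) * (n * (xpt θ' φ' a / 2)) := by
  have key : ∀ f g, (Jmat n a * stringMode n θ φ θ' φ' - stringMode n θ φ θ' φ' * Jmat n a) f g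
      = Jv n a (vcoh θ φ) f * conj (tpow n (vcoh θ' φ') g)
        - tpow n (vcoh θ φ) f * conj (Jv n a (vcoh θ' φ') g) := by
    intro f g
    rw [Matrix.sub_apply, Matrix.mul_apply, Matrix.mul_apply]
    unfold Jv
    rw [← Jmat_mulVec, ← Jmat_mulVec]
    simp only [stringMode, Matrix.of_apply, map_sum, map_mul, Jmat_conj, Finset.sum_mul,
      Finset.mul_sum]
    congr 1
    · exact Finset.sum_congr rfl fun _ _ => by ring
    · exact Finset.sum_congr rfl fun _ _ => by ring
  simp only [key]
  apply Complex.ofReal_injective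
  rw [comm_norm, ← cinner_conj (tpow n (vcoh θ φ)) (Jv n a (vcoh θ φ)),
    ← cinner_conj (tpow n (vcoh θ' φ')) (Jv n a (vcoh θ' φ'))]
  simp only [cinner_Jv_Jv _ _ _ (vcoh_self _ _), cinner_tpow_Jv _ _ _ (vcoh_self _ _),
    cinner_tpow_self _ _ (vcoh_self _ _), hp_hp, vcoh_self, vcoh_hp, hp_vcoh, map_mul,
    Complex.conj_ofReal, Complex.conj_natCast]
  push_cast
  ring

lemma xpt_sq (θ φ : ℝ) : ∑ a, xpt θ φ a ^ 2 = 1 := by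
  have h1 := Real.sin_sq_add_cos_sq θ
  have h2 := Real.sin_sq_add_cos_sq φ
  simp [Fin.sum_univ_three, xpt]
  grind

/-- Σ_{a=1}^{3} ‖[J_a, Ψ]‖_F² = n + (n²/4)·|x−y|² for the string mode
    Ψ = |v(θ,φ)^{⊗n}⟩⟨v(θ',φ')^{⊗n}|, where x = x(θ,φ), y = x(θ',φ'). -/
theorem string_mode_laplacian_energy (n : ℕ) (hn : 1 ≤ n) (θ φ θ' φ' : ℝ) :
    ∑ a : Fin 3, ∑ f, ∑ g,
        ‖(Jmat n a * stringMode n θ φ θ' φ' - stringMode n θ φ θ' φ' * Jmat n a) f g‖ ^ 2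
      = (n : ℝ) + ((n : ℝ) ^ 2 / 4) * ∑ a : Fin 3, (xpt θ φ a - xpt θ' φ' a) ^ 2 := by
  have h1 := xpt_sq θ φ
  have h2 := xpt_sq θ' φ'
  simp only [per_axis]
  simp only [Fin.sum_univ_three] at *
  linear_combination ((n : ℝ) * (n - 1) / 4 - n ^ 2 / 4) * h1 + ((n : ℝ) * (n - 1) / 4 - n ^ 2 / 4) * h2
end
end

section
/- Let n ≥ 1, let ξ = v(θ,φ)^{⊗n} and η = v(θ',φ')^{⊗n}, let x = x(θ,φ) and y = x(θ',φ'), and let Ψ = |ξ⟩⟨η| be the rank-one operator z ↦ ⟨η, z⟩ ξ on (ℂ²)^{⊗n}. Then for each a ∈ {1,2,3}, tr(Ψ† [J_a, Ψ]) = (n/2)(x_a − y_a). (This is the exact form of the statement that the string mode |x⟩⟨y| carries matrix momentum x − y.) -/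
open scoped BigOperators ComplexConjugate
open Matrix

noncomputable section

lemma vcoh_norm (θ φ : ℝ) : ∑ k, conj (vcoh θ φ k) * vcoh θ φ k = 1 := by
  have h1 : (Real.cos (θ/2) : ℂ)^2 + (Real.sin (θ/2) : ℂ)^2 = 1 := by
    exact_mod_cast Real.cos_sq_add_sin_sq (θ/2)
  have h2 : Complex.exp (-(Complex.I * φ)) * Complex.exp (Complex.I * φ) = 1 := by
    rw [← Complex.exp_add]; simp
  simp only [vcoh, Fin.sum_univ_two, Matrix.cons_val_zero, Matrix.cons_val_one, map_mul,
    Complex.conj_ofReal, ← Complex.exp_conj, Complex.conj_I, neg_mul]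
  linear_combination h1 + (Real.sin (θ/2) : ℂ)^2 * h2

lemma vcoh_pauli (θ φ : ℝ) (a : Fin 3) :
    ∑ k, conj (vcoh θ φ k) * (∑ l, pauli a k l / 2 * vcoh θ φ l) = (xpt θ φ a : ℂ) / 2 := by
  have hc : Real.cos θ = Real.cos (θ/2)^2 - Real.sin (θ/2)^2 := by
    rw [← Real.cos_two_mul']; congr 1; ring
  have hs : Real.sin θ = 2 * Real.sin (θ/2) * Real.cos (θ/2) := by
    rw [← Real.sin_two_mul]; congr 1; ring
  have e1 : Complex.exp (Complex.I * φ) = Real.cos φ + Real.sin φ * Complex.I := by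
    rw [mul_comm, Complex.exp_mul_I]; push_cast; rfl
  have h1 : (Real.cos φ : ℂ)^2 + (Real.sin φ : ℂ)^2 = 1 := by
    exact_mod_cast Real.cos_sq_add_sin_sq φ
  have hI := Complex.I_sq
  simp only [vcoh, e1, xpt, hc, hs]
  generalize Real.cos (θ/2) = c
  generalize Real.sin (θ/2) = s
  generalize Real.cos φ = C at *
  generalize Real.sin φ = S at *
  fin_cases a <;>
    simp [pauli, Fin.sum_univ_two]
  · ring
  · linear_combination (-(s:ℂ) * c * S) * hI
  · linear_combination (-(s:ℂ)^2/2) * h1 + ((s:ℂ)^2 * S^2 / 2) * hI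

lemma sum_prod_pi (n : ℕ) (w : Fin n → Fin 2 → ℂ) :
    ∑ f : Fin n → Fin 2, ∏ i, w i (f i) = ∏ i, ∑ k, w i k := by
  rw [Finset.prod_univ_sum]; simp

lemma tpow_norm (n : ℕ) (θ φ : ℝ) :
    star (tpow n (vcoh θ φ)) ⬝ᵥ tpow n (vcoh θ φ) = 1 := by
  simp only [dotProduct, tpow, Pi.star_apply, ← starRingEnd_apply, map_prod,
    ← Finset.prod_mul_distrib]
  rw [sum_prod_pi n (fun _ k => conj (vcoh θ φ k) * vcoh θ φ k)]
  simp only [vcoh_norm, Finset.prod_const_one]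

lemma Jmat_mulVec_s3 (n : ℕ) (a : Fin 3) (u : Fin 2 → ℂ) (f : Fin n → Fin 2) :
    (Jmat n a *ᵥ tpow n u) f =
      ∑ i, ∏ j, (if j = i then ∑ l, pauli a (f j) l / 2 * u l else u (f j)) := by
  simp only [mulVec, dotProduct, Jmat, Matrix.of_apply, Finset.sum_mul]
  rw [Finset.sum_comm]
  refine Finset.sum_congr rfl fun i _ => ?_
  rw [Finset.sum_comm, ← Finset.mul_prod_erase _ _ (Finset.mem_univ i), if_pos rfl, Finset.sum_mul]
  refine Finset.sum_congr rfl fun k _ => ?_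
  simp only [mul_assoc, ite_mul, one_mul, zero_mul, mul_ite, mul_zero, Finset.sum_ite_eq,
    Finset.mem_univ, if_true]
  rw [tpow, ← Finset.mul_prod_erase _ _ (Finset.mem_univ i), Function.update_self]
  congr 2
  refine Finset.prod_congr rfl fun j hj => ?_
  rw [if_neg (Finset.ne_of_mem_erase hj), Function.update_of_ne (Finset.ne_of_mem_erase hj)]

lemma tpow_J (n : ℕ) (θ φ : ℝ) (a : Fin 3) :
    star (tpow n (vcoh θ φ)) ⬝ᵥ (Jmat n a *ᵥ tpow n (vcoh θ φ)) = n * ((xpt θ φ a : ℂ) / 2) := by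
  simp only [dotProduct, Jmat_mulVec_s3, Finset.mul_sum]
  rw [Finset.sum_comm]
  have : ∀ i : Fin n, ∑ f : Fin n → Fin 2, star (tpow n (vcoh θ φ)) f *
      ∏ j, (if j = i then ∑ l, pauli a (f j) l / 2 * vcoh θ φ l else vcoh θ φ (f j))
      = (xpt θ φ a : ℂ) / 2 := by
    intro i
    simp only [tpow, Pi.star_apply, ← starRingEnd_apply, map_prod, ← Finset.prod_mul_distrib]
    rw [sum_prod_pi n (fun j k => conj (vcoh θ φ k) *
      (if j = i then ∑ l, pauli a k l / 2 * vcoh θ φ l else vcoh θ φ k))]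
    rw [Finset.prod_eq_single i]
    · simp only [if_true, vcoh_pauli]
    · intro j _ hj
      simp only [if_neg hj, vcoh_norm]
    · simp
  simp only [this]
  simp

/-- tr(Ψ† [J_a, Ψ]) = (n/2)(x_a − y_a) for the string mode
    Ψ = |v(θ,φ)^{⊗n}⟩⟨v(θ',φ')^{⊗n}|, where x = x(θ,φ), y = x(θ',φ'). -/
theorem string_mode_matrix_momentum (n : ℕ) (hn : 1 ≤ n) (θ φ θ' φ' : ℝ) (a : Fin 3) :
    Matrix.trace ((stringMode n θ φ θ' φ')ᴴ *
        (Jmat n a * stringMode n θ φ θ' φ' - stringMode n θ φ θ' φ' * Jmat n a))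
      = (((n : ℝ) / 2 * (xpt θ φ a - xpt θ' φ' a) : ℝ) : ℂ) := by
  have hS : stringMode n θ φ θ' φ' =
      vecMulVec (tpow n (vcoh θ φ)) (star (tpow n (vcoh θ' φ'))) := by
    ext f g
    simp [stringMode, vecMulVec_apply]
  have h1 := tpow_norm n θ φ
  have h2 := tpow_norm n θ' φ'
  have h3 := tpow_J n θ φ a
  have h4 := tpow_J n θ' φ' a
  rw [hS, conjTranspose_vecMulVec, star_star, mul_sub, trace_sub, mul_vecMulVec,
    vecMulVec_mul_vecMulVec, vecMulVec_mul (tpow n (vcoh θ φ)) (star (tpow n (vcoh θ' φ'))),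
    vecMulVec_mul_vecMulVec, h1, h3,
    trace_vecMulVec, trace_vecMulVec, dotProduct_smul, one_smul, dotProduct_comm _ (star _), h2,
    dotProduct_comm _ (_ ᵥ* _), ← dotProduct_mulVec, h4]
  push_cast
  simp only [smul_eq_mul]
  ring
end
end

section
/- Let n ≥ 1, let A be a linear operator on (ℂ²)^{⊗n} whose Frobenius (Hilbert–Schmidt) norm satisfies ‖A‖_F ≤ 1, and let η ∈ (ℂ²)^{⊗n} be a unit vector. Fix φ₀ and define f(θ) = ⟨η, A(v(θ,φ₀)^{⊗n})⟩. Then f is differentiable and |f′(θ)| ≤ √n / 2 for all θ. (This is the paper's regularity estimate: the off-diagonal string symbol of a Hilbert–Schmidt-normalized operator varies on scales no shorter than the noncommutativity length, i.e. its gradient is bounded by 1/L_NC.) -/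
open scoped BigOperators ComplexConjugate
open Matrix

noncomputable section

/-- Derivative of the coherent spinor in θ. -/
def wcoh (θ φ : ℝ) : Fin 2 → ℂ :=
  ![((-Real.sin (θ / 2) / 2 : ℝ) : ℂ),
    Complex.exp (Complex.I * (φ : ℂ)) * ((Real.cos (θ / 2) / 2 : ℝ) : ℂ)]

lemma vcoh_hasDerivAt (θ φ : ℝ) (b : Fin 2) :
    HasDerivAt (fun t : ℝ => vcoh t φ b) (wcoh θ φ b) θ := by
  have h0 : HasDerivAt (fun t : ℝ => t / 2) (1 / 2) θ := (hasDerivAt_id θ).div_const 2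
  have e0 : HasDerivAt (fun t : ℝ => vcoh t φ 0) (wcoh θ φ 0) θ := by
    have h := (h0.cos).ofReal_comp
    rw [show -Real.sin (θ / 2) * (1 / 2) = -Real.sin (θ / 2) / 2 by ring] at h
    exact h
  have e1 : HasDerivAt (fun t : ℝ => vcoh t φ 1) (wcoh θ φ 1) θ := by
    have h := ((h0.sin).ofReal_comp).const_mul (Complex.exp (Complex.I * (φ : ℂ)))
    rw [show Real.cos (θ / 2) * (1 / 2) = Real.cos (θ / 2) / 2 by ring] at h
    exact h
  fin_cases b
  · exact e0
  · exact e1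

lemma exp_conj_mul (φ : ℝ) : conj (Complex.exp (Complex.I * (φ : ℂ))) *
    Complex.exp (Complex.I * (φ : ℂ)) = 1 := by
  rw [← Complex.exp_conj, ← Complex.exp_add]
  simp

lemma vv (θ φ : ℝ) : ∑ b, conj (vcoh θ φ b) * vcoh θ φ b = 1 := by
  have h := exp_conj_mul φ
  have h2 : ((Real.cos (θ / 2) : ℝ) : ℂ) ^ 2 + ((Real.sin (θ / 2) : ℝ) : ℂ) ^ 2 = 1 := by
    exact_mod_cast Real.cos_sq_add_sin_sq (θ / 2)
  simp only [Fin.sum_univ_two, vcoh, Matrix.cons_val_zero, Matrix.cons_val_one, map_mul,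
    Complex.conj_ofReal]
  linear_combination ((Real.sin (θ / 2) : ℝ) : ℂ) ^ 2 * h + h2

lemma ww (θ φ : ℝ) : ∑ b, conj (wcoh θ φ b) * wcoh θ φ b = 1 / 4 := by
  have h := exp_conj_mul φ
  have h2 : ((Real.cos (θ / 2) : ℝ) : ℂ) ^ 2 + ((Real.sin (θ / 2) : ℝ) : ℂ) ^ 2 = 1 := by
    exact_mod_cast Real.cos_sq_add_sin_sq (θ / 2)
  simp only [Fin.sum_univ_two, wcoh, Matrix.cons_val_zero, Matrix.cons_val_one, map_mul,
    Complex.conj_ofReal]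
  rw [Complex.ofReal_div, Complex.ofReal_div, Complex.ofReal_neg, Complex.ofReal_ofNat]
  linear_combination ((Real.cos (θ / 2) : ℝ) : ℂ) ^ 2 / 4 * h + h2 / 4

lemma wv (θ φ : ℝ) : ∑ b, conj (wcoh θ φ b) * vcoh θ φ b = 0 := by
  have h := exp_conj_mul φ
  simp only [Fin.sum_univ_two, vcoh, wcoh, Matrix.cons_val_zero, Matrix.cons_val_one, map_mul,
    Complex.conj_ofReal]
  rw [Complex.ofReal_div, Complex.ofReal_div, Complex.ofReal_neg, Complex.ofReal_ofNat]
  linear_combination ((Real.cos (θ / 2) : ℝ) : ℂ) * ((Real.sin (θ / 2) : ℝ) : ℂ) / 2 * h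

/-- The i-th term of the Leibniz rule for the tensor power. -/
def leib (n : ℕ) (u w : Fin 2 → ℂ) (i : Fin n) (g : Fin n → Fin 2) : ℂ :=
  ∏ j, (if j = i then w else u) (g j)

lemma leib_eq (n : ℕ) (u w : Fin 2 → ℂ) (i : Fin n) (g : Fin n → Fin 2) :
    leib n u w i g = (∏ j ∈ Finset.univ.erase i, u (g j)) * w (g i) := by
  unfold leib
  rw [← Finset.prod_erase_mul _ _ (Finset.mem_univ i)]
  congr 1
  · refine Finset.prod_congr rfl fun j hj => ?_
    rw [if_neg (Finset.ne_of_mem_erase hj)]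
  · simp

lemma leib_inner (n : ℕ) (θ φ : ℝ) (i k : Fin n) :
    ∑ g, conj (leib n (vcoh θ φ) (wcoh θ φ) i g) * leib n (vcoh θ φ) (wcoh θ φ) k g
      = if i = k then 1 / 4 else 0 := by
  have h : ∑ g, conj (leib n (vcoh θ φ) (wcoh θ φ) i g) * leib n (vcoh θ φ) (wcoh θ φ) k g
      = ∏ j, ∑ b, conj ((if j = i then wcoh θ φ else vcoh θ φ) b) *
          (if j = k then wcoh θ φ else vcoh θ φ) b := by
    rw [Finset.prod_univ_sum, Fintype.piFinset_univ]
    refine Finset.sum_congr rfl fun g _ => ?_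
    simp only [leib, map_prod, Finset.prod_mul_distrib]
  rw [h]
  split_ifs with hik
  · subst hik
    rw [Finset.prod_eq_single i]
    · simpa using ww θ φ
    · intro j _ hj
      simpa [hj] using vv θ φ
    · simp
  · refine Finset.prod_eq_zero (Finset.mem_univ i) ?_
    simpa [hik] using wv θ φ

lemma leib_norm (n : ℕ) (θ φ : ℝ) :
    ∑ g, ‖∑ i, leib n (vcoh θ φ) (wcoh θ φ) i g‖ ^ 2 = (n : ℝ) / 4 := by
  have h : ((∑ g, ‖∑ i, leib n (vcoh θ φ) (wcoh θ φ) i g‖ ^ 2 : ℝ) : ℂ) = ((n : ℝ) / 4 : ℝ) := by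
    push_cast
    simp_rw [← Complex.conj_mul', map_sum, Finset.sum_mul_sum]
    rw [Finset.sum_comm]
    have : ∀ i : Fin n, ∑ g, ∑ k, conj (leib n (vcoh θ φ) (wcoh θ φ) i g) *
        leib n (vcoh θ φ) (wcoh θ φ) k g = 1 / 4 := by
      intro i
      rw [Finset.sum_comm]
      simp_rw [leib_inner]
      simp
    simp_rw [this]
    simp
    ring
  exact_mod_cast h

lemma bilin_bound {ι : Type} [Fintype ι] (A : Matrix ι ι ℂ)
    (hA : ∑ f, ∑ g, ‖A f g‖ ^ 2 ≤ 1) (η D : ι → ℂ) (hη : ∑ f, ‖η f‖ ^ 2 = 1) :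
    ‖∑ f, conj (η f) * ∑ g, A f g * D g‖ ^ 2 ≤ ∑ g, ‖D g‖ ^ 2 := by
  have h1 : ‖∑ f, conj (η f) * ∑ g, A f g * D g‖
      ≤ ∑ p : ι × ι, ‖A p.1 p.2‖ * (‖η p.1‖ * ‖D p.2‖) := by
    simp_rw [Finset.mul_sum]
    rw [← Fintype.sum_prod_type' (f := fun f g => conj (η f) * (A f g * D g))]
    refine (norm_sum_le _ _).trans (le_of_eq (Finset.sum_congr rfl fun p _ => ?_))
    simp only [norm_mul, RCLike.norm_conj]
    ring
  have h2 := Finset.sum_mul_sq_le_sq_mul_sq Finset.univ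
    (fun p : ι × ι => ‖A p.1 p.2‖) (fun p => ‖η p.1‖ * ‖D p.2‖)
  have h3 : ∑ p : ι × ι, (‖η p.1‖ * ‖D p.2‖) ^ 2 = ∑ g, ‖D g‖ ^ 2 := by
    simp_rw [mul_pow]
    rw [Fintype.sum_prod_type' (f := fun f g => ‖η f‖ ^ 2 * ‖D g‖ ^ 2), ← Finset.sum_mul_sum,
      hη, one_mul]
  have h4 : ∑ p : ι × ι, ‖A p.1 p.2‖ ^ 2 ≤ 1 := by
    rw [Fintype.sum_prod_type' (f := fun f g => ‖A f g‖ ^ 2)]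
    exact hA
  have h5 : 0 ≤ ∑ g, ‖D g‖ ^ 2 := Finset.sum_nonneg fun _ _ => sq_nonneg _
  rw [h3] at h2
  calc _ ≤ (∑ p : ι × ι, ‖A p.1 p.2‖ * (‖η p.1‖ * ‖D p.2‖)) ^ 2 := by gcongr
    _ ≤ _ := h2
    _ ≤ 1 * ∑ g, ‖D g‖ ^ 2 := by gcongr
    _ = _ := one_mul _

/-- if ‖A‖_F ≤ 1 and ‖η‖ = 1, then the string symbol
    f(θ) = ⟨η, A(v(θ,φ₀)^{⊗n})⟩ is differentiable with |f′(θ)| ≤ √n / 2. -/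
theorem string_symbol_gradient_bound (n : ℕ) (hn : 1 ≤ n)
    (A : Matrix (Fin n → Fin 2) (Fin n → Fin 2) ℂ)
    (hA : ∑ f, ∑ g, ‖A f g‖ ^ 2 ≤ 1)
    (η : (Fin n → Fin 2) → ℂ) (hη : ∑ f, ‖η f‖ ^ 2 = 1) (φ₀ : ℝ) :
    ∀ θ : ℝ, ∃ d : ℂ,
      HasDerivAt (fun t : ℝ => cinner η (A.mulVec (tpow n (vcoh t φ₀)))) d θ ∧
      ‖d‖ ≤ Real.sqrt n / 2 := by
  intro θ
  refine ⟨∑ f, conj (η f) * ∑ g, A f g * ∑ i, leib n (vcoh θ φ₀) (wcoh θ φ₀) i g, ?_, ?_⟩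
  · simp only [cinner, Matrix.mulVec, dotProduct]
    refine HasDerivAt.fun_sum fun f _ => HasDerivAt.const_mul _ ?_
    refine HasDerivAt.fun_sum fun g _ => HasDerivAt.const_mul _ ?_
    simp only [tpow, leib_eq]
    have h := HasDerivAt.fun_finsetProd (u := Finset.univ)
      (fun i _ => vcoh_hasDerivAt θ φ₀ (g i))
    simpa only [smul_eq_mul] using h
  · have h := bilin_bound A hA η (fun g => ∑ i, leib n (vcoh θ φ₀) (wcoh θ φ₀) i g) hη
    rw [leib_norm] at h
    have h2 := Real.le_sqrt_of_sq_le h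
    refine h2.trans (le_of_eq ?_)
    rw [Real.sqrt_div (Nat.cast_nonneg n)]
    congr 1
    rw [show (4 : ℝ) = 2 ^ 2 by norm_num]
    exact Real.sqrt_sq (by norm_num)
end
end

section
/- Let N ≥ 2, n = N−1, and ξ(θ,φ) = v(θ,φ)^{⊗n}. Then for all (θ₁,φ₁) and (θ₂,φ₂): (N/(4π)) ∫₀^{2π} ∫₀^{π} ⟨ξ(θ₁,φ₁), ξ(θ,φ)⟩ ⟨ξ(θ,φ), ξ(θ₂,φ₂)⟩ sin θ dθ dφ = ⟨ξ(θ₁,φ₁), ξ(θ₂,φ₂)⟩. (This is the overcompleteness relation 1 = (N/4π)∫_{S²} |x⟩⟨x| dx for coherent states on the fuzzy sphere, evaluated between arbitrary coherent states.) -/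
open scoped BigOperators ComplexConjugate
open Matrix

noncomputable section

theorem cinner_tpow_aux (n : ℕ) (u w : Fin 2 → ℂ) :
    cinner (tpow n u) (tpow n w) = (conj (u 1) * w 1 + conj (u 0) * w 0) ^ n := by
  unfold cinner tpow
  have h := Finset.sum_pow' (Finset.univ : Finset (Fin 2)) (fun k => conj (u k) * w k) n
  rw [Fin.sum_univ_two, Fintype.piFinset_univ] at h
  rw [add_comm, h]
  refine Finset.sum_congr rfl fun f _ => ?_
  rw [map_prod, Finset.prod_mul_distrib]

theorem phi_aux (j k : ℕ) :
    (∫ φ in (0:ℝ)..(2 * Real.pi),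
      Complex.exp (Complex.I * (φ : ℂ)) ^ j * Complex.exp (-(Complex.I * (φ : ℂ))) ^ k)
      = if j = k then 2 * (Real.pi : ℂ) else 0 := by
  have h : ∀ φ : ℝ, Complex.exp (Complex.I * (φ : ℂ)) ^ j *
      Complex.exp (-(Complex.I * (φ : ℂ))) ^ k
      = Complex.exp ((((j : ℤ) - (k : ℤ) : ℤ) : ℂ) * Complex.I * (φ : ℂ)) := by
    intro φ
    rw [← Complex.exp_nat_mul, ← Complex.exp_nat_mul, ← Complex.exp_add]
    congr 1
    push_cast
    ring
  simp_rw [h]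
  split_ifs with hjk
  · subst hjk
    simp
  · have hz : (((j : ℤ) - (k : ℤ) : ℤ) : ℂ) ≠ 0 := by
      rw [Int.cast_ne_zero]; omega
    rw [integral_exp_mul_complex (mul_ne_zero hz Complex.I_ne_zero)]
    have e : (((j : ℤ) - (k : ℤ) : ℤ) : ℂ) * Complex.I * ((2 * Real.pi : ℝ) : ℂ)
        = (((j : ℤ) - (k : ℤ) : ℤ) : ℂ) * (2 * Real.pi * Complex.I) := by
      push_cast; ring
    rw [e, Complex.exp_int_mul_two_pi_mul_I]
    simp

theorem theta_rec_aux (p q : ℕ) :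
    ((q : ℝ) + 1) * (∫ θ in (0:ℝ)..Real.pi,
        Real.sin (θ/2) ^ (2 * q) * Real.cos (θ/2) ^ (2 * (p + 1)) * Real.sin θ)
      = ((p : ℝ) + 1) * (∫ θ in (0:ℝ)..Real.pi,
        Real.sin (θ/2) ^ (2 * (q + 1)) * Real.cos (θ/2) ^ (2 * p) * Real.sin θ) := by
  have hd : ∀ θ : ℝ, HasDerivAt
      (fun θ : ℝ => 2 * (Real.sin (θ/2) ^ (2 * q + 2) * Real.cos (θ/2) ^ (2 * p + 2)))
      (((q : ℝ) + 1) * (Real.sin (θ/2) ^ (2 * q) * Real.cos (θ/2) ^ (2 * (p + 1)) * Real.sin θ)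
       - ((p : ℝ) + 1) * (Real.sin (θ/2) ^ (2 * (q + 1)) * Real.cos (θ/2) ^ (2 * p) * Real.sin θ))
      θ := by
    intro θ
    have hh : HasDerivAt (fun θ : ℝ => θ / 2) (1 / 2) θ := (hasDerivAt_id θ).div_const 2
    have h1 := (hh.sin.pow (2 * q + 2)).mul (hh.cos.pow (2 * p + 2))
    have h2 := h1.const_mul 2
    have hs : Real.sin θ = 2 * Real.sin (θ/2) * Real.cos (θ/2) := by
      rw [← Real.sin_two_mul]; congr 1; ring
    refine h2.congr_deriv ?_
    rw [hs]
    simp only [Pi.pow_apply, show 2 * q + 2 - 1 = 2 * q + 1 by omega,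
      show 2 * p + 2 - 1 = 2 * p + 1 by omega]
    push_cast
    ring
  have hi := intervalIntegral.integral_eq_sub_of_hasDerivAt (a := 0) (b := Real.pi)
    (fun θ _ => hd θ) (Continuous.intervalIntegrable (by fun_prop) _ _)
  rw [intervalIntegral.integral_sub (Continuous.intervalIntegrable (by fun_prop) _ _)
    (Continuous.intervalIntegrable (by fun_prop) _ _), intervalIntegral.integral_const_mul,
    intervalIntegral.integral_const_mul] at hi
  simp at hi
  simpa using sub_eq_zero.mp hi

theorem theta_zero_aux (p : ℕ) :
    ((p : ℝ) + 1) * (∫ θ in (0:ℝ)..Real.pi,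
        Real.sin (θ/2) ^ (2 * 0) * Real.cos (θ/2) ^ (2 * p) * Real.sin θ) = 2 := by
  have hd : ∀ θ : ℝ, HasDerivAt
      (fun θ : ℝ => -2 * (Real.cos (θ/2) ^ (2 * p + 2)))
      (((p : ℝ) + 1) * (Real.sin (θ/2) ^ (2 * 0) * Real.cos (θ/2) ^ (2 * p) * Real.sin θ))
      θ := by
    intro θ
    have hh : HasDerivAt (fun θ : ℝ => θ / 2) (1 / 2) θ := (hasDerivAt_id θ).div_const 2
    have h2 := (hh.cos.pow (2 * p + 2)).const_mul (-2)
    have hs : Real.sin θ = 2 * Real.sin (θ/2) * Real.cos (θ/2) := by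
      rw [← Real.sin_two_mul]; congr 1; ring
    refine h2.congr_deriv ?_
    rw [hs]
    simp only [show 2 * p + 2 - 1 = 2 * p + 1 by omega]
    push_cast
    ring
  have hi := intervalIntegral.integral_eq_sub_of_hasDerivAt (a := 0) (b := Real.pi)
    (fun θ _ => hd θ) (Continuous.intervalIntegrable (by fun_prop) _ _)
  rw [intervalIntegral.integral_const_mul] at hi
  rw [hi]
  simp

theorem theta_aux (q : ℕ) : ∀ p : ℕ,
    ((p + q + 1 : ℕ) : ℝ) * ((p + q).choose q : ℝ) * (∫ θ in (0:ℝ)..Real.pi,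
        Real.sin (θ/2) ^ (2 * q) * Real.cos (θ/2) ^ (2 * p) * Real.sin θ) = 2 := by
  induction q with
  | zero => intro p; simpa using theta_zero_aux p
  | succ q ih =>
    intro p
    have h := ih (p + 1)
    have r := theta_rec_aux p q
    have c := Nat.choose_succ_right_eq (p + q + 1) q
    rw [show p + q + 1 - q = p + 1 by omega] at c
    have c' : ((p + q + 1).choose (q + 1) : ℝ) * ((q : ℝ) + 1)
        = ((p + q + 1).choose q : ℝ) * ((p : ℝ) + 1) := by exact_mod_cast c
    rw [show p + 1 + q = p + q + 1 by omega] at h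
    rw [show p + (q + 1) = p + q + 1 by omega]
    set A := ∫ θ in (0:ℝ)..Real.pi,
        Real.sin (θ/2) ^ (2 * q) * Real.cos (θ/2) ^ (2 * (p + 1)) * Real.sin θ
    set B := ∫ θ in (0:ℝ)..Real.pi,
        Real.sin (θ/2) ^ (2 * (q + 1)) * Real.cos (θ/2) ^ (2 * p) * Real.sin θ
    have hp : ((p : ℝ) + 1) ≠ 0 := by positivity
    have hq : ((q : ℝ) + 1) ≠ 0 := by positivity
    apply mul_left_cancel₀ hq
    rw [← h]
    linear_combination ((p + q + 1 + 1 : ℕ) : ℝ) * B * c'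
      - ((p + q + 1 + 1 : ℕ) : ℝ) * ((p + q + 1).choose q : ℝ) * r

theorem theta_complex_aux (n j : ℕ) (hj : j ≤ n) :
    ((n : ℂ) + 1) * (n.choose j : ℂ) * (∫ θ in (0:ℝ)..Real.pi,
        ((Real.sin (θ/2) : ℂ) ^ (j + j) * (Real.cos (θ/2) : ℂ) ^ ((n - j) + (n - j)) *
          (Real.sin θ : ℂ))) = 2 := by
  have h := theta_aux j (n - j)
  rw [Nat.sub_add_cancel hj] at h
  have h' := congrArg (fun x : ℝ => (x : ℂ)) h
  simp only [Complex.ofReal_mul, ← intervalIntegral.integral_ofReal] at h'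
  push_cast at h'
  rw [← h']
  push_cast
  simp only [two_mul]

theorem expand_aux (n : ℕ) (a b c d e f C S s : ℂ) :
    (b * (e * S) + a * C) ^ n * (f * S * d + C * c) ^ n * s
      = ∑ j ∈ Finset.range (n + 1), ∑ k ∈ Finset.range (n + 1),
        ((n.choose j : ℂ) * (n.choose k : ℂ) * b ^ j * a ^ (n - j) * d ^ k * c ^ (n - k)) *
          (e ^ j * f ^ k) * (S ^ (j + k) * C ^ ((n - j) + (n - k)) * s) := by
  rw [add_pow, add_pow, Finset.sum_mul_sum, Finset.sum_mul]
  refine Finset.sum_congr rfl fun j _ => ?_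
  rw [Finset.sum_mul]
  refine Finset.sum_congr rfl fun k _ => ?_
  simp only [mul_pow, pow_add]
  ring

theorem integral_aux (n : ℕ) (a b c d : ℂ) :
    (∫ φ in (0:ℝ)..(2 * Real.pi), ∫ θ in (0:ℝ)..Real.pi,
      (b * (Complex.exp (Complex.I * (φ : ℂ)) * (Real.sin (θ/2) : ℂ))
          + a * (Real.cos (θ/2) : ℂ)) ^ n *
        (Complex.exp (-(Complex.I * (φ : ℂ))) * (Real.sin (θ/2) : ℂ) * d
          + (Real.cos (θ/2) : ℂ) * c) ^ n * (Real.sin θ : ℂ))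
      = 4 * (Real.pi : ℂ) / ((n : ℂ) + 1) * (b * d + a * c) ^ n := by
  have hn : (n : ℂ) + 1 ≠ 0 := by exact_mod_cast Nat.succ_ne_zero n
  have h1 : ∀ φ : ℝ, (∫ θ in (0:ℝ)..Real.pi,
      (b * (Complex.exp (Complex.I * (φ : ℂ)) * (Real.sin (θ/2) : ℂ))
          + a * (Real.cos (θ/2) : ℂ)) ^ n *
        (Complex.exp (-(Complex.I * (φ : ℂ))) * (Real.sin (θ/2) : ℂ) * d
          + (Real.cos (θ/2) : ℂ) * c) ^ n * (Real.sin θ : ℂ))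
      = ∑ j ∈ Finset.range (n + 1), ∑ k ∈ Finset.range (n + 1),
        ((n.choose j : ℂ) * (n.choose k : ℂ) * b ^ j * a ^ (n - j) * d ^ k * c ^ (n - k)) *
          (Complex.exp (Complex.I * (φ : ℂ)) ^ j * Complex.exp (-(Complex.I * (φ : ℂ))) ^ k) *
          ∫ θ in (0:ℝ)..Real.pi, ((Real.sin (θ/2) : ℂ) ^ (j + k) *
            (Real.cos (θ/2) : ℂ) ^ ((n - j) + (n - k)) * (Real.sin θ : ℂ)) := by
    intro φ
    simp_rw [expand_aux]
    rw [intervalIntegral.integral_finsetSum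
      (fun j _ => Continuous.intervalIntegrable (by fun_prop) _ _)]
    refine Finset.sum_congr rfl fun j _ => ?_
    rw [intervalIntegral.integral_finsetSum
      (fun j _ => Continuous.intervalIntegrable (by fun_prop) _ _)]
    refine Finset.sum_congr rfl fun k _ => ?_
    rw [intervalIntegral.integral_const_mul]
  simp_rw [h1]
  rw [intervalIntegral.integral_finsetSum
      (fun j _ => Continuous.intervalIntegrable (by fun_prop) _ _), add_pow, Finset.mul_sum]
  refine Finset.sum_congr rfl fun j hj => ?_
  rw [intervalIntegral.integral_finsetSum
      (fun j _ => Continuous.intervalIntegrable (by fun_prop) _ _)]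
  simp_rw [intervalIntegral.integral_mul_const, intervalIntegral.integral_const_mul, phi_aux]
  rw [Finset.sum_eq_single j]
  · have hj' : j ≤ n := Nat.lt_succ_iff.mp (Finset.mem_range.mp hj)
    have ht := theta_complex_aux n j hj'
    rw [if_pos rfl]
    set T := ∫ θ in (0:ℝ)..Real.pi,
        ((Real.sin (θ/2) : ℂ) ^ (j + j) * (Real.cos (θ/2) : ℂ) ^ ((n - j) + (n - j)) *
          (Real.sin θ : ℂ))
    rw [mul_pow, mul_pow]
    field_simp
    linear_combination ((n.choose j : ℂ) * b ^ j * a ^ (n - j) * d ^ j * c ^ (n - j)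
      * 2) * ht
  · intro k _ hk
    rw [if_neg (Ne.symm hk)]
    ring
  · intro h
    exact absurd hj h

/-- the overcompleteness relation 1 = (N/4π)∫_{S²} |x⟩⟨x| dx for
    coherent states ξ(θ,φ) = v(θ,φ)^{⊗(N−1)}, evaluated between arbitrary coherent
    states: (N/4π) ∫₀^{2π}∫₀^{π} ⟨ξ₁, ξ(θ,φ)⟩⟨ξ(θ,φ), ξ₂⟩ sin θ dθ dφ = ⟨ξ₁, ξ₂⟩. -/
theorem coherent_state_completeness (N : ℕ) (hN : 2 ≤ N) (θ₁ φ₁ θ₂ φ₂ : ℝ) :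
    ((N : ℂ) / (4 * (Real.pi : ℂ))) *
      ∫ φ in (0:ℝ)..(2 * Real.pi), ∫ θ in (0:ℝ)..Real.pi,
        cinner (tpow (N - 1) (vcoh θ₁ φ₁)) (tpow (N - 1) (vcoh θ φ)) *
          cinner (tpow (N - 1) (vcoh θ φ)) (tpow (N - 1) (vcoh θ₂ φ₂)) *
          (Real.sin θ : ℂ)
      = cinner (tpow (N - 1) (vcoh θ₁ φ₁)) (tpow (N - 1) (vcoh θ₂ φ₂)) := by
  obtain ⟨n, rfl⟩ : ∃ n, N = n + 1 := ⟨N - 1, by omega⟩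
  simp only [Nat.add_sub_cancel, cinner_tpow_aux]
  have e0 : ∀ θ φ : ℝ, vcoh θ φ 0 = (Real.cos (θ / 2) : ℂ) := fun _ _ => rfl
  have e1 : ∀ θ φ : ℝ, vcoh θ φ 1
      = Complex.exp (Complex.I * (φ : ℂ)) * (Real.sin (θ / 2) : ℂ) := fun _ _ => rfl
  have c0 : ∀ θ φ : ℝ, conj (vcoh θ φ 0) = (Real.cos (θ / 2) : ℂ) := by
    intro θ φ; rw [e0, Complex.conj_ofReal]
  have c1 : ∀ θ φ : ℝ, conj (vcoh θ φ 1)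
      = Complex.exp (-(Complex.I * (φ : ℂ))) * (Real.sin (θ / 2) : ℂ) := by
    intro θ φ
    rw [e1, map_mul, Complex.conj_ofReal, ← Complex.exp_conj, map_mul, Complex.conj_I,
      Complex.conj_ofReal, neg_mul]
  have key := integral_aux n (conj (vcoh θ₁ φ₁ 0)) (conj (vcoh θ₁ φ₁ 1))
    (vcoh θ₂ φ₂ 0) (vcoh θ₂ φ₂ 1)
  simp only [c0, c1] at key ⊢
  simp only [e0, e1] at key ⊢
  rw [key]
  have hn : (n : ℂ) + 1 ≠ 0 := by exact_mod_cast Nat.succ_ne_zero n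
  have hpi : (Real.pi : ℂ) ≠ 0 := by exact_mod_cast Real.pi_ne_zero
  push_cast
  field_simp
end
end

section
/- Let N ≥ 2, n = N−1, and ξ(θ,φ) = v(θ,φ)^{⊗n}. Then for all (θ₁,φ₁), (θ₂,φ₂) and each a ∈ {1,2,3}: ⟨ξ(θ₁,φ₁), J_a ξ(θ₂,φ₂)⟩ = (N(N+1)/(8π)) ∫₀^{2π} ∫₀^{π} x_a(θ,φ) ⟨ξ(θ₁,φ₁), ξ(θ,φ)⟩ ⟨ξ(θ,φ), ξ(θ₂,φ₂)⟩ sin θ dθ dφ. (This is the coherent-state integral representation X^a = √((N+1)/(N−1)) (N/4π) ∫_{S²} x^a |x⟩⟨x| dx of the fuzzy sphere coordinate operators, evaluated between arbitrary coherent states.) -/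
open scoped BigOperators ComplexConjugate
open Matrix

noncomputable section

/-- Double integral over the coordinate rectangle. -/
def dint (h : ℝ → ℝ → ℂ) : ℂ :=
  ∫ φ in (0:ℝ)..(2 * Real.pi), ∫ θ in (0:ℝ)..Real.pi, h φ θ

lemma dint_const_mul (c : ℂ) (h : ℝ → ℝ → ℂ) :
    dint (fun φ θ => c * h φ θ) = c * dint h := by
  simp [dint, intervalIntegral.integral_const_mul]

lemma dint_sum {ι : Type} (s : Finset ι) (h : ι → ℝ → ℝ → ℂ)
    (hc : ∀ i ∈ s, Continuous (Function.uncurry (h i))) :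
    dint (fun φ θ => ∑ i ∈ s, h i φ θ) = ∑ i ∈ s, dint (h i) := by
  unfold dint
  rw [← intervalIntegral.integral_finsetSum]
  · congr 1
    ext φ
    rw [intervalIntegral.integral_finsetSum]
    intro i hi
    apply Continuous.intervalIntegrable
    exact (hc i hi).comp (by fun_prop : Continuous fun θ : ℝ => (φ, θ))
  · intro i hi
    apply Continuous.intervalIntegrable
    exact intervalIntegral.continuous_parametric_intervalIntegral_of_continuous' (hc i hi) _ _

lemma dint_add (h g : ℝ → ℝ → ℂ)
    (hh : Continuous (Function.uncurry h)) (hg : Continuous (Function.uncurry g)) :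
    dint (fun φ θ => h φ θ + g φ θ) = dint h + dint g := by
  have := dint_sum (Finset.univ : Finset (Fin 2)) ![h, g] (by
    intro i _
    fin_cases i
    · exact hh
    · exact hg)
  simpa [Fin.sum_univ_two] using this

lemma dint_mul (f g : ℝ → ℂ) :
    dint (fun φ θ => f φ * g θ)
      = (∫ φ in (0:ℝ)..(2 * Real.pi), f φ) * ∫ θ in (0:ℝ)..Real.pi, g θ := by
  simp [dint, intervalIntegral.integral_const_mul, intervalIntegral.integral_mul_const]

lemma phi_int (p q : ℕ) :
    (∫ φ in (0:ℝ)..(2 * Real.pi), Complex.exp (Complex.I * (φ : ℂ)) ^ p *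
      Complex.exp (-(Complex.I * (φ : ℂ))) ^ q) = if p = q then 2 * (Real.pi : ℂ) else 0 := by
  have h : ∀ φ : ℝ, Complex.exp (Complex.I * (φ : ℂ)) ^ p *
      Complex.exp (-(Complex.I * (φ : ℂ))) ^ q
        = Complex.exp ((((p : ℂ) - q) * Complex.I) * φ) := by
    intro φ
    rw [← Complex.exp_nat_mul, ← Complex.exp_nat_mul, ← Complex.exp_add]
    congr 1; ring
  simp_rw [h]
  split_ifs with hpq
  · subst hpq; simp
  · have hne : (p : ℂ) - q ≠ 0 := by
      rw [sub_ne_zero]; exact_mod_cast hpq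
    rw [integral_exp_mul_complex (mul_ne_zero hne Complex.I_ne_zero)]
    have : Complex.exp (((p : ℂ) - q) * Complex.I * ((2 * Real.pi : ℝ) : ℂ)) = 1 := by
      rw [Complex.exp_eq_one_iff]
      exact ⟨(p : ℤ) - q, by push_cast; ring⟩
    rw [this]; simp

lemma beta_nat (a b : ℕ) :
    (∫ t in (0:ℝ)..1, (t : ℂ) ^ b * (1 - (t : ℂ)) ^ a)
      = (a.factorial : ℂ) * b.factorial / (a + b + 1).factorial := by
  have h := Complex.Gamma_mul_Gamma_eq_betaIntegral (s := (b : ℂ) + 1) (t := (a : ℂ) + 1)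
    (by simp; positivity) (by simp; positivity)
  have e : (b : ℂ) + 1 + (a + 1) = ((a + b + 1 : ℕ) : ℂ) + 1 := by push_cast; ring
  rw [e, Complex.Gamma_nat_eq_factorial, Complex.Gamma_nat_eq_factorial,
    Complex.Gamma_nat_eq_factorial, Complex.betaIntegral] at h
  simp only [add_sub_cancel_right, Complex.cpow_natCast] at h
  rw [eq_div_iff (by exact_mod_cast Nat.factorial_ne_zero _)]
  rw [mul_comm, ← h, mul_comm]

lemma theta_int (a b : ℕ) :
    (∫ θ in (0:ℝ)..Real.pi, (Real.cos (θ / 2) : ℂ) ^ (2 * a) * (Real.sin (θ / 2) : ℂ) ^ (2 * b)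
      * (Real.sin θ : ℂ))
      = 2 * ((a.factorial : ℂ) * b.factorial / (a + b + 1).factorial) := by
  rw [← beta_nat]
  have h := intervalIntegral.integral_deriv_smul_comp (a := 0) (b := Real.pi)
    (f := fun θ => Real.sin (θ / 2) ^ 2) (f' := fun θ => Real.sin θ / 2)
    (g := fun t : ℝ => (t : ℂ) ^ b * (1 - (t : ℂ)) ^ a)
    (by
      intro x _
      have h1 : HasDerivAt (fun θ : ℝ => Real.sin (θ / 2)) (Real.cos (x / 2) * (1 / 2)) x :=
        ((hasDerivAt_id x).div_const 2).sin
      have h2 := h1.pow 2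
      refine h2.congr_deriv ?_
      have : Real.sin x = 2 * Real.sin (x / 2) * Real.cos (x / 2) := by
        rw [← Real.sin_two_mul]; congr 1; ring
      rw [this]; push_cast; ring)
    (by fun_prop) (by fun_prop)
  simp only [zero_div, Real.sin_zero, Real.sin_pi_div_two, one_pow, ne_eq, OfNat.ofNat_ne_zero,
    not_false_eq_true, zero_pow] at h
  rw [← h, ← intervalIntegral.integral_const_mul]
  congr 1
  ext θ
  have : (1 : ℂ) - ((Real.sin (θ / 2) ^ 2 : ℝ) : ℂ) = (Real.cos (θ / 2) : ℂ) ^ 2 := by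
    rw [← Complex.ofReal_one, ← Complex.ofReal_sub, ← Complex.ofReal_pow]
    congr 1
    have := Real.sin_sq_add_cos_sq (θ / 2)
    linarith
  simp only [Function.comp_apply, Complex.real_smul, this]
  rw [pow_mul, pow_mul]
  push_cast
  ring

/-- tensor powers -/
lemma cinner_tpow (n : ℕ) (u w : Fin 2 → ℂ) :
    cinner (tpow n u) (tpow n w) = (conj (u 0) * w 0 + conj (u 1) * w 1) ^ n := by
  unfold cinner tpow
  simp only [map_prod, ← Finset.prod_mul_distrib]
  rw [← Fintype.prod_sum (fun (_ : Fin n) (k : Fin 2) => conj (u k) * w k)]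
  simp [Fin.sum_univ_two]

lemma cinner_J (n : ℕ) (a : Fin 3) (u w : Fin 2 → ℂ) :
    cinner (tpow n u) ((Jmat n a).mulVec (tpow n w)) =
      n * ((conj (u 0) * (pauli a 0 0 * w 0 + pauli a 0 1 * w 1)
        + conj (u 1) * (pauli a 1 0 * w 0 + pauli a 1 1 * w 1)) / 2) *
        (conj (u 0) * w 0 + conj (u 1) * w 1) ^ (n - 1) := by
  have hJ : ∀ f, (Jmat n a).mulVec (tpow n w) f =
      ∑ i : Fin n, ∏ l, (if l = i then (∑ k, pauli a (f l) k * w k) / 2 else w (f l)) := by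
    intro f
    simp only [Matrix.mulVec, dotProduct, Jmat, Matrix.of_apply, Finset.sum_mul]
    rw [Finset.sum_comm]
    refine Finset.sum_congr rfl fun i _ => ?_
    rw [Finset.sum_comm]
    rw [← Finset.mul_prod_erase _ _ (Finset.mem_univ i)]
    simp only [if_true]
    rw [Finset.sum_div, Finset.sum_mul]
    refine Finset.sum_congr rfl fun k _ => ?_
    simp only [mul_ite, mul_one, mul_zero, ite_mul, zero_mul, Finset.sum_ite_eq,
      Finset.mem_univ, if_true]
    unfold tpow
    rw [← Finset.mul_prod_erase _ _ (Finset.mem_univ i)]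
    simp only [Function.update_self]
    rw [Finset.prod_congr rfl (g := fun l => if l = i then
      (∑ k, pauli a (f l) k * w k) / 2 else w (f l))]
    · ring
    · intro l hl
      have : l ≠ i := Finset.ne_of_mem_erase hl
      simp [this]
  unfold cinner
  simp only [hJ, Finset.mul_sum]
  rw [Finset.sum_comm]
  have : ∀ i : Fin n, (∑ f : Fin n → Fin 2, conj (tpow n u f) *
      ∏ l, (if l = i then (∑ k, pauli a (f l) k * w k) / 2 else w (f l))) =
      ((conj (u 0) * (pauli a 0 0 * w 0 + pauli a 0 1 * w 1)
        + conj (u 1) * (pauli a 1 0 * w 0 + pauli a 1 1 * w 1)) / 2) *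
        (conj (u 0) * w 0 + conj (u 1) * w 1) ^ (n - 1) := by
    intro i
    unfold tpow
    simp only [map_prod, ← Finset.prod_mul_distrib]
    rw [← Fintype.prod_sum (fun (l : Fin n) (m : Fin 2) => conj (u m) *
      (if l = i then (∑ k, pauli a m k * w k) / 2 else w m))]
    rw [← Finset.mul_prod_erase _ _ (Finset.mem_univ i)]
    rw [Finset.prod_congr rfl (g := fun l => conj (u 0) * w 0 + conj (u 1) * w 1)]
    · simp only [Finset.prod_const, Finset.card_erase_of_mem (Finset.mem_univ i),
        Finset.card_univ, Fintype.card_fin, if_true, Fin.sum_univ_two]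
      ring
    · intro l hl
      have : l ≠ i := Finset.ne_of_mem_erase hl
      simp [this, Fin.sum_univ_two]
  simp only [this]
  simp [mul_assoc]

/-- Expansion of a weighted kernel integral in monomials. -/
lemma weight_int (n p q r t : ℕ) (A B C D : ℂ) :
    dint (fun φ θ => Complex.exp (Complex.I * (φ : ℂ)) ^ p *
      Complex.exp (-(Complex.I * (φ : ℂ))) ^ q *
      ((Real.cos (θ / 2) : ℂ) ^ r * (Real.sin (θ / 2) : ℂ) ^ t) *
      (B * (Complex.exp (Complex.I * (φ : ℂ)) * (Real.sin (θ / 2) : ℂ))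
        + A * (Real.cos (θ / 2) : ℂ)) ^ n *
      (D * (Complex.exp (-(Complex.I * (φ : ℂ))) * (Real.sin (θ / 2) : ℂ))
        + C * (Real.cos (θ / 2) : ℂ)) ^ n * (Real.sin θ : ℂ)) =
    ∑ j ∈ Finset.range (n + 1), ∑ k ∈ Finset.range (n + 1),
      if p + j = q + k then
        (B ^ j * A ^ (n - j) * n.choose j * (D ^ k * C ^ (n - k) * n.choose k)) *
        (2 * Real.pi *
        ∫ θ in (0:ℝ)..Real.pi, (Real.cos (θ / 2) : ℂ) ^ (r + (n - j) + (n - k)) *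
          (Real.sin (θ / 2) : ℂ) ^ (t + j + k) * (Real.sin θ : ℂ)) else 0 := by
  have key : ∀ j ∈ Finset.range (n + 1), ∀ k ∈ Finset.range (n + 1),
      (if p + j = q + k then
        (B ^ j * A ^ (n - j) * n.choose j * (D ^ k * C ^ (n - k) * n.choose k)) *
        (2 * Real.pi *
        ∫ θ in (0:ℝ)..Real.pi, (Real.cos (θ / 2) : ℂ) ^ (r + (n - j) + (n - k)) *
          (Real.sin (θ / 2) : ℂ) ^ (t + j + k) * (Real.sin θ : ℂ)) else 0) =
      dint (fun φ θ => (B ^ j * A ^ (n - j) * n.choose j * (D ^ k * C ^ (n - k) * n.choose k)) *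
        ((Complex.exp (Complex.I * (φ : ℂ)) ^ (p + j) *
          Complex.exp (-(Complex.I * (φ : ℂ))) ^ (q + k)) *
        ((Real.cos (θ / 2) : ℂ) ^ (r + (n - j) + (n - k)) *
          (Real.sin (θ / 2) : ℂ) ^ (t + j + k) * (Real.sin θ : ℂ)))) := by
    intro j _ k _
    rw [dint_const_mul, dint_mul, phi_int]
    split_ifs <;> simp
  rw [Finset.sum_congr rfl fun j hj => Finset.sum_congr rfl fun k hk => key j hj k hk]
  rw [Finset.sum_congr rfl fun j hj => (dint_sum _ _ (fun k _ => by
    unfold Function.uncurry; fun_prop)).symm]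
  rw [← dint_sum _ _ (fun k _ => by unfold Function.uncurry; fun_prop)]
  congr 1
  ext φ θ
  rw [add_pow, add_pow]
  rw [mul_assoc (_ * _) (Finset.sum _ _) (Finset.sum _ _), Finset.sum_mul_sum, Finset.mul_sum, Finset.sum_mul]
  refine Finset.sum_congr rfl fun j _ => ?_
  rw [Finset.mul_sum, Finset.sum_mul]
  refine Finset.sum_congr rfl fun k _ => ?_
  simp only [mul_pow, pow_add]
  ring

lemma theta_int' (a b x y : ℕ) (hx : x = 2 * a) (hy : y = 2 * b) :
    (∫ θ in (0:ℝ)..Real.pi, (Real.cos (θ / 2) : ℂ) ^ x * (Real.sin (θ / 2) : ℂ) ^ y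
      * (Real.sin θ : ℂ))
      = 2 * ((a.factorial : ℂ) * b.factorial / (a + b + 1).factorial) := by
  subst hx hy
  exact theta_int a b

lemma sumA (m : ℕ) (x y : ℂ) :
    ∑ j ∈ Finset.range (m + 1 + 1), y ^ j * x ^ (m + 1 - j) * ((m + 1).choose j : ℂ)
      * ((m + 1 - j : ℕ) : ℂ) = (m + 1) * x * (y + x) ^ m := by
  rw [Finset.sum_range_succ, add_pow, Finset.mul_sum]
  simp only [Nat.sub_self, Nat.cast_zero, mul_zero, add_zero]
  refine Finset.sum_congr rfl fun j hj => ?_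
  have hj' : j ≤ m := by simpa [Nat.lt_succ_iff] using hj
  have e : m + 1 - j = (m - j) + 1 := by omega
  have h : (m + 1) * m.choose j = (m + 1).choose j * (m + 1 - j) := by
    have := Nat.add_one_mul_choose_eq m (m - j)
    rw [Nat.choose_symm hj', ← e, Nat.choose_symm (by omega)] at this
    exact this
  have h' : ((m : ℂ) + 1) * (m.choose j : ℂ)
      = ((m + 1).choose j : ℂ) * ((m + 1 - j : ℕ) : ℂ) := by exact_mod_cast h
  rw [mul_assoc _ ((m + 1).choose j : ℂ), ← h', e, pow_succ]
  ring

lemma sumB (m : ℕ) (x y : ℂ) :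
    ∑ j ∈ Finset.range (m + 1 + 1), y ^ j * x ^ (m + 1 - j) * ((m + 1).choose j : ℂ)
      * (j : ℂ) = (m + 1) * y * (y + x) ^ m := by
  rw [Finset.sum_range_succ', add_pow, Finset.mul_sum]
  simp only [Nat.cast_zero, mul_zero, add_zero]
  refine Finset.sum_congr rfl fun j hj => ?_
  have h := Nat.add_one_mul_choose_eq m j
  have h' : ((m : ℂ) + 1) * (m.choose j : ℂ)
      = ((m + 1).choose (j + 1) : ℂ) * ((j + 1 : ℕ) : ℂ) := by exact_mod_cast h
  rw [mul_assoc _ ((m + 1).choose (j + 1) : ℂ), ← h', Nat.add_sub_add_right, pow_succ]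
  ring

lemma coef_diag (n j a : ℕ) (hj : j ≤ n) :
    ((n.choose j : ℂ) * n.choose j * ((n - j).factorial * j.factorial * a) / (n + 2).factorial)
      = n.choose j * a / ((n + 1) * (n + 2)) := by
  have h := Nat.choose_mul_factorial_mul_factorial hj
  have h' : (n.choose j : ℂ) * j.factorial * (n - j).factorial = n.factorial := by
    exact_mod_cast h
  have h1 : ((n + 2).factorial : ℂ) = (n + 2) * ((n + 1) * n.factorial) := by
    rw [Nat.factorial_succ, Nat.factorial_succ]; push_cast; ring
  have h2 : (n.factorial : ℂ) ≠ 0 := by exact_mod_cast Nat.factorial_ne_zero n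
  have h3 : (n : ℂ) + 1 ≠ 0 := by exact_mod_cast Nat.succ_ne_zero n
  have h4 : (n : ℂ) + 2 ≠ 0 := by exact_mod_cast Nat.succ_ne_zero (n + 1)
  rw [h1, div_eq_div_iff (mul_ne_zero h4 (mul_ne_zero h3 h2)) (mul_ne_zero h3 h4)]
  rw [← h']; ring

lemma coef_off (m j : ℕ) (hj : j ≤ m) :
    (((m + 1).choose j : ℂ) * (m + 1).choose (j + 1) *
      ((m + 1 - j).factorial * (j + 1).factorial) / (m + 1 + 2).factorial)
      = (m + 1) * m.choose j / ((m + 2) * (m + 3)) := by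
  have h0 := coef_diag (m + 1) j (j + 1) (by omega)
  have h : ((m : ℂ) + 1) * (m.choose j : ℂ)
      = ((m + 1).choose (j + 1) : ℂ) * ((j + 1 : ℕ) : ℂ) := by
    exact_mod_cast Nat.add_one_mul_choose_eq m j
  have hc : ((m + 1).choose j : ℂ) ≠ 0 := by
    exact_mod_cast (Nat.choose_pos (by omega : j ≤ m + 1)).ne'
  have hd : ((m + 1 : ℕ) : ℂ) + 1 = m + 2 := by push_cast; ring
  have hd' : ((m + 1 : ℕ) : ℂ) + 2 = m + 3 := by push_cast; ring
  rw [hd, hd'] at h0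
  rw [h]
  apply mul_left_cancel₀ hc
  rw [Nat.factorial_succ j]
  push_cast at h0 ⊢
  linear_combination ((m + 1).choose (j + 1) : ℂ) * h0

lemma W00 (m : ℕ) (A B C D : ℂ) :
    dint (fun φ θ => Complex.exp (Complex.I * (φ : ℂ)) ^ 0 *
      Complex.exp (-(Complex.I * (φ : ℂ))) ^ 0 *
      ((Real.cos (θ / 2) : ℂ) ^ 2 * (Real.sin (θ / 2) : ℂ) ^ 0) *
      (B * (Complex.exp (Complex.I * (φ : ℂ)) * (Real.sin (θ / 2) : ℂ))
        + A * (Real.cos (θ / 2) : ℂ)) ^ (m + 1) *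
      (D * (Complex.exp (-(Complex.I * (φ : ℂ))) * (Real.sin (θ / 2) : ℂ))
        + C * (Real.cos (θ / 2) : ℂ)) ^ (m + 1) * (Real.sin θ : ℂ)) =
    4 * Real.pi / ((m + 2) * (m + 3)) *
      ((m + 1) * (A * C) * (B * D + A * C) ^ m + (B * D + A * C) ^ (m + 1)) := by
  rw [weight_int, ← sumA, add_pow (B * D) (A * C) (m + 1), ← Finset.sum_add_distrib,
    Finset.mul_sum]
  refine Finset.sum_congr rfl fun j hj => ?_
  have hj' : j ≤ m + 1 := by simpa [Nat.lt_succ_iff] using hj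
  simp only [zero_add]
  rw [Finset.sum_ite_eq, if_pos hj, theta_int' (m + 1 - j + 1) j _ _ (by ring) (by ring)]
  have h0 := coef_diag (m + 1) j (m + 1 - j + 1) hj'
  have hd : ((m + 1 : ℕ) : ℂ) + 1 = m + 2 := by push_cast; ring
  have hd' : ((m + 1 : ℕ) : ℂ) + 2 = m + 3 := by push_cast; ring
  rw [hd, hd'] at h0
  have he : m + 1 - j + 1 + j + 1 = m + 1 + 2 := by omega
  rw [he, Nat.factorial_succ (m + 1 - j), mul_pow, mul_pow]
  push_cast [-Nat.cast_sub] at h0 ⊢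
  linear_combination (B ^ j * A ^ (m + 1 - j) * D ^ j * C ^ (m + 1 - j) * 4 * Real.pi) * h0

lemma W11 (m : ℕ) (A B C D : ℂ) :
    dint (fun φ θ => Complex.exp (Complex.I * (φ : ℂ)) ^ 0 *
      Complex.exp (-(Complex.I * (φ : ℂ))) ^ 0 *
      ((Real.cos (θ / 2) : ℂ) ^ 0 * (Real.sin (θ / 2) : ℂ) ^ 2) *
      (B * (Complex.exp (Complex.I * (φ : ℂ)) * (Real.sin (θ / 2) : ℂ))
        + A * (Real.cos (θ / 2) : ℂ)) ^ (m + 1) *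
      (D * (Complex.exp (-(Complex.I * (φ : ℂ))) * (Real.sin (θ / 2) : ℂ))
        + C * (Real.cos (θ / 2) : ℂ)) ^ (m + 1) * (Real.sin θ : ℂ)) =
    4 * Real.pi / ((m + 2) * (m + 3)) *
      ((m + 1) * (B * D) * (B * D + A * C) ^ m + (B * D + A * C) ^ (m + 1)) := by
  rw [weight_int, ← sumB, add_pow (B * D) (A * C) (m + 1), ← Finset.sum_add_distrib,
    Finset.mul_sum]
  refine Finset.sum_congr rfl fun j hj => ?_
  have hj' : j ≤ m + 1 := by simpa [Nat.lt_succ_iff] using hj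
  simp only [zero_add]
  rw [Finset.sum_ite_eq, if_pos hj, theta_int' (m + 1 - j) (j + 1) _ _ (by ring) (by ring)]
  have h0 := coef_diag (m + 1) j (j + 1) hj'
  have hd : ((m + 1 : ℕ) : ℂ) + 1 = m + 2 := by push_cast; ring
  have hd' : ((m + 1 : ℕ) : ℂ) + 2 = m + 3 := by push_cast; ring
  rw [hd, hd'] at h0
  have he : m + 1 - j + (j + 1) + 1 = m + 1 + 2 := by omega
  rw [he, Nat.factorial_succ j, mul_pow, mul_pow]
  push_cast at h0 ⊢
  linear_combination (B ^ j * A ^ (m + 1 - j) * D ^ j * C ^ (m + 1 - j) * 4 * Real.pi) * h0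

lemma W10 (m : ℕ) (A B C D : ℂ) :
    dint (fun φ θ => Complex.exp (Complex.I * (φ : ℂ)) ^ 1 *
      Complex.exp (-(Complex.I * (φ : ℂ))) ^ 0 *
      ((Real.cos (θ / 2) : ℂ) ^ 1 * (Real.sin (θ / 2) : ℂ) ^ 1) *
      (B * (Complex.exp (Complex.I * (φ : ℂ)) * (Real.sin (θ / 2) : ℂ))
        + A * (Real.cos (θ / 2) : ℂ)) ^ (m + 1) *
      (D * (Complex.exp (-(Complex.I * (φ : ℂ))) * (Real.sin (θ / 2) : ℂ))
        + C * (Real.cos (θ / 2) : ℂ)) ^ (m + 1) * (Real.sin θ : ℂ)) =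
    4 * Real.pi / ((m + 2) * (m + 3)) * ((m + 1) * (A * D) * (B * D + A * C) ^ m) := by
  rw [weight_int, Finset.sum_range_succ, add_pow (B * D) (A * C) m, Finset.mul_sum,
    Finset.mul_sum]
  simp only [zero_add, Finset.sum_ite_eq]
  rw [if_neg (by simp), add_zero]
  refine Finset.sum_congr rfl fun j hj => ?_
  have hj' : j ≤ m := by simpa [Nat.lt_succ_iff] using hj
  rw [if_pos (by simp; omega),
    theta_int' (m + 1 - j) (j + 1) _ _ (by omega) (by omega)]
  have h0 := coef_off m j hj'
  have he : m + 1 - j + (j + 1) + 1 = m + 1 + 2 := by omega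
  rw [he, mul_pow, mul_pow, add_comm 1 j, Nat.add_sub_add_right]
  have e1 : A ^ (m + 1 - j) = A ^ (m - j) * A := by
    rw [← pow_succ]; congr 1; omega
  rw [e1]
  linear_combination (B ^ j * A ^ (m - j) * A * D ^ (j + 1) * C ^ (m - j) * 4 * Real.pi) * h0

lemma W01 (m : ℕ) (A B C D : ℂ) :
    dint (fun φ θ => Complex.exp (Complex.I * (φ : ℂ)) ^ 0 *
      Complex.exp (-(Complex.I * (φ : ℂ))) ^ 1 *
      ((Real.cos (θ / 2) : ℂ) ^ 1 * (Real.sin (θ / 2) : ℂ) ^ 1) *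
      (B * (Complex.exp (Complex.I * (φ : ℂ)) * (Real.sin (θ / 2) : ℂ))
        + A * (Real.cos (θ / 2) : ℂ)) ^ (m + 1) *
      (D * (Complex.exp (-(Complex.I * (φ : ℂ))) * (Real.sin (θ / 2) : ℂ))
        + C * (Real.cos (θ / 2) : ℂ)) ^ (m + 1) * (Real.sin θ : ℂ)) =
    4 * Real.pi / ((m + 2) * (m + 3)) * ((m + 1) * (B * C) * (B * D + A * C) ^ m) := by
  rw [weight_int, Finset.sum_comm, Finset.sum_range_succ, add_pow (B * D) (A * C) m,
    Finset.mul_sum, Finset.mul_sum]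
  simp only [zero_add, Finset.sum_ite_eq']
  rw [if_neg (by simp), add_zero]
  refine Finset.sum_congr rfl fun j hj => ?_
  have hj' : j ≤ m := by simpa [Nat.lt_succ_iff] using hj
  rw [if_pos (by simp; omega),
    theta_int' (m + 1 - j) (j + 1) _ _ (by omega) (by omega)]
  have h0 := coef_off m j hj'
  have he : m + 1 - j + (j + 1) + 1 = m + 1 + 2 := by omega
  rw [he, mul_pow, mul_pow, add_comm 1 j, Nat.add_sub_add_right]
  have e1 : C ^ (m + 1 - j) = C ^ (m - j) * C := by
    rw [← pow_succ]; congr 1; omega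
  rw [e1]
  linear_combination (D ^ j * A ^ (m - j) * C * B ^ (j + 1) * C ^ (m - j) * 4 * Real.pi) * h0

lemma kernel_int (m : ℕ) (A B C D : ℂ) (a : Fin 3) :
    dint (fun φ θ => (xpt θ φ a : ℂ) *
      (B * (Complex.exp (Complex.I * (φ : ℂ)) * (Real.sin (θ / 2) : ℂ))
        + A * (Real.cos (θ / 2) : ℂ)) ^ (m + 1) *
      (D * (Complex.exp (-(Complex.I * (φ : ℂ))) * (Real.sin (θ / 2) : ℂ))
        + C * (Real.cos (θ / 2) : ℂ)) ^ (m + 1) * (Real.sin θ : ℂ)) =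
    4 * Real.pi / ((m + 2) * (m + 3)) * ((m + 1) *
      (A * (pauli a 0 0 * C + pauli a 0 1 * D) + B * (pauli a 1 0 * C + pauli a 1 1 * D)) *
      (B * D + A * C) ^ m) := by
  have hs : ∀ θ : ℝ, (Real.sin θ : ℂ)
      = 2 * (Real.sin (θ / 2) : ℂ) * (Real.cos (θ / 2) : ℂ) := by
    intro θ
    have : Real.sin θ = 2 * Real.sin (θ / 2) * Real.cos (θ / 2) := by
      rw [← Real.sin_two_mul]; congr 1; ring
    exact_mod_cast this
  have hc : ∀ θ : ℝ, (Real.cos θ : ℂ)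
      = (Real.cos (θ / 2) : ℂ) ^ 2 - (Real.sin (θ / 2) : ℂ) ^ 2 := by
    intro θ
    have : Real.cos θ = Real.cos (θ / 2) ^ 2 - Real.sin (θ / 2) ^ 2 := by
      rw [← Real.cos_two_mul']; congr 1; ring
    exact_mod_cast this
  have hcφ : ∀ φ : ℝ, (Real.cos φ : ℂ)
      = (Complex.exp (Complex.I * φ) + Complex.exp (-(Complex.I * φ))) / 2 := by
    intro φ
    rw [Complex.ofReal_cos, Complex.cos, mul_comm Complex.I, neg_mul]
  have hsφ : ∀ φ : ℝ, (Real.sin φ : ℂ)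
      = -Complex.I * (Complex.exp (Complex.I * φ) - Complex.exp (-(Complex.I * φ))) / 2 := by
    intro φ
    rw [Complex.ofReal_sin, Complex.sin, mul_comm Complex.I, neg_mul]
    ring
  obtain rfl | rfl | rfl : a = 0 ∨ a = 1 ∨ a = 2 := by fin_cases a <;> simp
  · have h := congrArg₂ (· + ·) (W10 m A B C D) (W01 m A B C D)
    beta_reduce at h
    rw [← dint_add _ _ (by unfold Function.uncurry; fun_prop)
      (by unfold Function.uncurry; fun_prop)] at h
    convert h using 1
    · congr 1
      ext φ θ
      have hx : xpt θ φ 0 = Real.sin θ * Real.cos φ := rfl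
      rw [hx, Complex.ofReal_mul, hcφ]
      nth_rw 1 [hs θ]
      ring
    · have p00 : pauli 0 0 0 = 0 := rfl
      have p01 : pauli 0 0 1 = 1 := rfl
      have p10 : pauli 0 1 0 = 1 := rfl
      have p11 : pauli 0 1 1 = 0 := rfl
      rw [p00, p01, p10, p11]
      ring
  · have h := congrArg₂ (· + ·) (congrArg (-Complex.I * ·) (W10 m A B C D))
      (congrArg (Complex.I * ·) (W01 m A B C D))
    beta_reduce at h
    rw [← dint_const_mul, ← dint_const_mul, ← dint_add _ _ (by unfold Function.uncurry; fun_prop)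
      (by unfold Function.uncurry; fun_prop)] at h
    convert h using 1
    · congr 1
      ext φ θ
      have hx : xpt θ φ 1 = Real.sin θ * Real.sin φ := rfl
      rw [hx, Complex.ofReal_mul, hsφ φ]
      nth_rw 1 [hs θ]
      ring
    · have p00 : pauli 1 0 0 = 0 := rfl
      have p01 : pauli 1 0 1 = -Complex.I := rfl
      have p10 : pauli 1 1 0 = Complex.I := rfl
      have p11 : pauli 1 1 1 = 0 := rfl
      rw [p00, p01, p10, p11]
      ring
  · have h := congrArg₂ (· + ·) (W00 m A B C D) (congrArg ((-1 : ℂ) * ·) (W11 m A B C D))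
    beta_reduce at h
    rw [← dint_const_mul, ← dint_add _ _ (by unfold Function.uncurry; fun_prop)
      (by unfold Function.uncurry; fun_prop)] at h
    convert h using 1
    · congr 1
      ext φ θ
      have : xpt θ φ 2 = Real.cos θ := rfl
      rw [this, hc]
      ring
    · have p00 : pauli 2 0 0 = 1 := rfl
      have p01 : pauli 2 0 1 = 0 := rfl
      have p10 : pauli 2 1 0 = 0 := rfl
      have p11 : pauli 2 1 1 = -1 := rfl
      rw [p00, p01, p10, p11]
      ring

/-- the coherent-state integral representation
    J_a = (N(N+1)/8π) ∫_{S²} x_a |x⟩⟨x| dx of the fuzzy sphere coordinate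
    operators, evaluated between arbitrary coherent states ξ(θ,φ) = v(θ,φ)^{⊗(N−1)}. -/
theorem coherent_state_X_representation (N : ℕ) (hN : 2 ≤ N) (θ₁ φ₁ θ₂ φ₂ : ℝ) (a : Fin 3) :
    cinner (tpow (N - 1) (vcoh θ₁ φ₁))
        ((Jmat (N - 1) a).mulVec (tpow (N - 1) (vcoh θ₂ φ₂)))
      = ((N : ℂ) * ((N : ℂ) + 1) / (8 * (Real.pi : ℂ))) *
        ∫ φ in (0:ℝ)..(2 * Real.pi), ∫ θ in (0:ℝ)..Real.pi,
          (xpt θ φ a : ℂ) *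
            cinner (tpow (N - 1) (vcoh θ₁ φ₁)) (tpow (N - 1) (vcoh θ φ)) *
            cinner (tpow (N - 1) (vcoh θ φ)) (tpow (N - 1) (vcoh θ₂ φ₂)) *
            (Real.sin θ : ℂ) := by

  obtain ⟨m, rfl⟩ : ∃ m, N = m + 2 := ⟨N - 2, by omega⟩
  have e : m + 2 - 1 = m + 1 := by omega
  rw [e, cinner_J]
  have h := kernel_int m (conj (vcoh θ₁ φ₁ 0)) (conj (vcoh θ₁ φ₁ 1)) (vcoh θ₂ φ₂ 0)
    (vcoh θ₂ φ₂ 1) a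
  have hI : (∫ φ in (0:ℝ)..(2 * Real.pi), ∫ θ in (0:ℝ)..Real.pi,
          (xpt θ φ a : ℂ) *
            cinner (tpow (m + 1) (vcoh θ₁ φ₁)) (tpow (m + 1) (vcoh θ φ)) *
            cinner (tpow (m + 1) (vcoh θ φ)) (tpow (m + 1) (vcoh θ₂ φ₂)) *
            (Real.sin θ : ℂ)) =
      4 * Real.pi / ((m + 2) * (m + 3)) * ((m + 1) *
      (conj (vcoh θ₁ φ₁ 0) * (pauli a 0 0 * vcoh θ₂ φ₂ 0 + pauli a 0 1 * vcoh θ₂ φ₂ 1)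
        + conj (vcoh θ₁ φ₁ 1) * (pauli a 1 0 * vcoh θ₂ φ₂ 0 + pauli a 1 1 * vcoh θ₂ φ₂ 1)) *
      (conj (vcoh θ₁ φ₁ 1) * vcoh θ₂ φ₂ 1 + conj (vcoh θ₁ φ₁ 0) * vcoh θ₂ φ₂ 0) ^ m) := by
    refine Eq.trans ?_ h
    change dint _ = dint _
    congr 1
    ext φ θ
    rw [cinner_tpow, cinner_tpow]
    have h0 : vcoh θ φ 0 = (Real.cos (θ / 2) : ℂ) := rfl
    have h1 : vcoh θ φ 1 = Complex.exp (Complex.I * (φ : ℂ)) * (Real.sin (θ / 2) : ℂ) := rfl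
    have h2 : conj (vcoh θ φ 1)
        = Complex.exp (-(Complex.I * (φ : ℂ))) * (Real.sin (θ / 2) : ℂ) := by
      rw [h1, map_mul, Complex.conj_ofReal, ← Complex.exp_conj, map_mul, Complex.conj_I,
        Complex.conj_ofReal, neg_mul]
    rw [h2, h1, h0, Complex.conj_ofReal]
    congr 3
    · rw [add_comm]
    · ring
  rw [hI]
  have hpi : (Real.pi : ℂ) ≠ 0 := by exact_mod_cast Real.pi_ne_zero
  have h3 : (m : ℂ) + 2 ≠ 0 := by exact_mod_cast Nat.succ_ne_zero (m + 1)
  have h4 : (m : ℂ) + 3 ≠ 0 := by exact_mod_cast Nat.succ_ne_zero (m + 2)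
  have h5 : ((m + 2 : ℕ) : ℂ) + 1 = m + 3 := by push_cast; ring
  have h6 : ((m + 2 : ℕ) : ℂ) = m + 2 := by push_cast; ring
  rw [h5, h6, Nat.add_sub_cancel,
    add_comm (conj (vcoh θ₁ φ₁ 0) * vcoh θ₂ φ₂ 0) (conj (vcoh θ₁ φ₁ 1) * vcoh θ₂ φ₂ 1)]
  push_cast
  generalize (conj (vcoh θ₁ φ₁ 1) * vcoh θ₂ φ₂ 1 + conj (vcoh θ₁ φ₁ 0) * vcoh θ₂ φ₂ 0) ^ m = S
  generalize conj (vcoh θ₁ φ₁ 0) * (pauli a 0 0 * vcoh θ₂ φ₂ 0 + pauli a 0 1 * vcoh θ₂ φ₂ 1)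
    + conj (vcoh θ₁ φ₁ 1) * (pauli a 1 0 * vcoh θ₂ φ₂ 0 + pauli a 1 1 * vcoh θ₂ φ₂ 1) = T
  field_simp
  ring
end
end

section
/- For all integers N ≥ 1 and 0 ≤ l ≤ N−1: (N−l−1)! (N+l)! / ((N−1)!)² = N · Π_{m=1}^{l} (N+m)/(N−m), and this quantity is at least N · e^{l²/N}. (This is the exact product formula and exponential lower bound for the normalization constants 4π c_l² relating fuzzy and classical spherical harmonics, underlying the asymptotics c_l² ∼ (N/4π) e^{N x²} with x = l/N.) -/
open scoped BigOperators

lemma fuzzy_exp_le (x : ℝ) (h0 : 0 ≤ x) (h1 : x < 1) : Real.exp (2 * x) ≤ (1 + x) / (1 - x) := by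
  have h := Real.hasSum_log_sub_log_of_abs_lt_one (x := x) (by rw [abs_of_nonneg h0]; exact h1)
  have h2 := le_hasSum h 0 (fun j _ => by positivity)
  norm_num at h2
  have h3 : 0 < 1 - x := by linarith
  have h4 : 0 < 1 + x := by linarith
  rw [← Real.le_log_iff_exp_le (by positivity), Real.log_div h4.ne' h3.ne']
  linarith

lemma fuzzy_eq (N l : ℕ) (hl : l + 1 ≤ N) :
    (((N - l - 1).factorial * (N + l).factorial : ℕ) : ℝ) / ((N - 1).factorial : ℝ) ^ 2
        = (N : ℝ) * ∏ m ∈ Finset.Icc 1 l, ((N : ℝ) + (m : ℝ)) / ((N : ℝ) - (m : ℝ)) := by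
  induction l with
  | zero =>
    obtain ⟨k, rfl⟩ : ∃ k, N = k + 1 := ⟨N - 1, by omega⟩
    have : (k.factorial : ℝ) ≠ 0 := by positivity
    simp [Nat.factorial_succ]
    field_simp
  | succ l ih =>
    rw [Finset.prod_Icc_succ_top (by omega), ← mul_assoc, ← ih (by omega)]
    obtain ⟨k, rfl⟩ : ∃ k, N = k + l + 2 := ⟨N - l - 2, by omega⟩
    have e1 : k + l + 2 - (l + 1) - 1 = k := by omega
    have e2 : k + l + 2 - l - 1 = k + 1 := by omega
    have e3 : ((k + l + 2 : ℕ) : ℝ) - ((l + 1 : ℕ) : ℝ) = k + 1 := by push_cast; ring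
    rw [e1, e2, e3, ← add_assoc (k + l + 2) l 1, Nat.factorial_succ k,
      Nat.factorial_succ (k + l + 2 + l)]
    have h1 : ((k + l + 2 - 1).factorial : ℝ) ≠ 0 := by positivity
    have h2 : (k : ℝ) + 1 ≠ 0 := by positivity
    push_cast
    field_simp
    ring

lemma fuzzy_prod (N l : ℕ) (hl : l + 1 ≤ N) :
    Real.exp ((l : ℝ) ^ 2 / (N : ℝ)) ≤
      ∏ m ∈ Finset.Icc 1 l, ((N : ℝ) + (m : ℝ)) / ((N : ℝ) - (m : ℝ)) := by
  induction l with
  | zero => simp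
  | succ l ih =>
    rw [Finset.prod_Icc_succ_top (by omega)]
    have hN : (0 : ℝ) < N := by exact_mod_cast (by omega : 0 < N)
    have hlt : ((l + 1 : ℕ) : ℝ) < N := by exact_mod_cast (by omega : l + 1 < N)
    have hx := fuzzy_exp_le (((l + 1 : ℕ) : ℝ) / N) (by positivity) ((div_lt_one hN).2 hlt)
    have e : (1 + ((l + 1 : ℕ) : ℝ) / N) / (1 - ((l + 1 : ℕ) : ℝ) / N)
        = ((N : ℝ) + ((l + 1 : ℕ) : ℝ)) / ((N : ℝ) - ((l + 1 : ℕ) : ℝ)) := by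
      rw [one_add_div hN.ne', one_sub_div hN.ne', div_div_div_cancel_right₀ hN.ne']
    rw [e] at hx
    refine le_trans ?_ (mul_le_mul (ih (by omega)) hx (Real.exp_pos _).le
      ((Real.exp_pos _).le.trans (ih (by omega))))
    rw [← Real.exp_add, Real.exp_le_exp, ← mul_div_assoc, ← add_div]
    apply div_le_div_of_nonneg_right _ hN.le
    push_cast
    nlinarith

/-- for 0 ≤ l ≤ N−1,
    (N−l−1)! (N+l)! / ((N−1)!)² = N · Π_{m=1}^{l} (N+m)/(N−m), and this quantity
    is at least N · e^{l²/N}  (the normalization constants 4π c_l²). -/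
theorem fuzzy_normalization_product (N l : ℕ) (hN : 1 ≤ N) (hl : l ≤ N - 1) :
    (((N - l - 1).factorial * (N + l).factorial : ℕ) : ℝ) / ((N - 1).factorial : ℝ) ^ 2
        = (N : ℝ) * ∏ m ∈ Finset.Icc 1 l, ((N : ℝ) + (m : ℝ)) / ((N : ℝ) - (m : ℝ)) ∧
      (N : ℝ) * Real.exp ((l : ℝ) ^ 2 / (N : ℝ))
        ≤ (((N - l - 1).factorial * (N + l).factorial : ℕ) : ℝ)
            / ((N - 1).factorial : ℝ) ^ 2 := by
  have h := fuzzy_eq N l (by omega)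
  refine ⟨h, ?_⟩
  rw [h]
  exact mul_le_mul_of_nonneg_left (fuzzy_prod N l (by omega)) (Nat.cast_nonneg N)
end

section
/- For every natural number k: ∫_{−1}^{1} (1 − P_k(u))/(1−u) du = 2 Σ_{n=1}^{k} 1/n, where P_k is the k-th Legendre polynomial. (This is the key integral identity used to evaluate the string symbol of the propagator on the fuzzy sphere.) -/
open scoped BigOperators

noncomputable section

/-- The k-th Legendre polynomial, via the Rodrigues formula
    P_k(u) = (1/(2^k k!)) dᵏ/duᵏ (u² − 1)^k. -/
def legendreP (k : ℕ) (u : ℝ) : ℝ :=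
  (1 / ((2 : ℝ) ^ k * (k.factorial : ℝ))) *
    iteratedDeriv k (fun x : ℝ => (x ^ 2 - 1) ^ k) u

/-- Iterated derivatives of a polynomial composed with an affine map. -/
theorem aux_iteratedDeriv (p : Polynomial ℝ) (a b : ℝ) (n : ℕ) :
    iteratedDeriv n (fun x : ℝ => p.eval (a * x + b)) =
      fun x => a ^ n * (Polynomial.derivative^[n] p).eval (a * x + b) := by
  induction n with
  | zero => simp
  | succ n ih =>
    rw [iteratedDeriv_succ, ih]
    funext x
    have h1 : HasDerivAt (fun x : ℝ => a * x + b) a x := by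
      simpa using ((hasDerivAt_id x).const_mul a).add_const b
    have h2 := ((Polynomial.derivative^[n] p).hasDerivAt (a * x + b)).comp x h1
    have h3 := (h2.const_mul (a ^ n)).deriv
    rw [Function.iterate_succ_apply']
    refine Eq.trans h3 ?_
    ring

theorem aux_legendre (k : ℕ) (u : ℝ) :
    legendreP k u = ∑ j ∈ Finset.range (k + 1),
      (-1 : ℝ) ^ j * k.choose j * (k + j).choose k * (1 / 2 - u / 2) ^ j := by
  have h := congrArg (Polynomial.map (Int.castRingHom ℝ))
    (Polynomial.factorial_mul_shiftedLegendre_eq k)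
  rw [← Polynomial.iterate_derivative_map] at h
  simp only [Polynomial.map_mul, Polynomial.map_natCast, Polynomial.map_pow, Polynomial.map_X,
    Polynomial.map_sub, Polynomial.map_one] at h
  have hf : (fun x : ℝ => (x ^ 2 - 1) ^ k) = fun x : ℝ =>
      (Polynomial.C ((-4 : ℝ) ^ k) * (Polynomial.X ^ k * (1 - Polynomial.X) ^ k)).eval
        ((-1 / 2) * x + 1 / 2) := by
    funext x
    simp only [Polynomial.eval_mul, Polynomial.eval_C, Polynomial.eval_pow, Polynomial.eval_X,
      Polynomial.eval_sub, Polynomial.eval_one, ← mul_pow]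
    congr 1
    ring
  have hk : (k.factorial : ℝ) ≠ 0 := by exact_mod_cast k.factorial_ne_zero
  have h2 : (-1 / 2 : ℝ) ^ k * (-4) ^ k = 2 ^ k := by rw [← mul_pow]; norm_num
  have h3 : (2 : ℝ) ^ k ≠ 0 := by positivity
  have h4 : (-1 / 2) * u + 1 / 2 = 1 / 2 - u / 2 := by ring
  rw [legendreP, hf, aux_iteratedDeriv, Polynomial.iterate_derivative_C_mul, ← h]
  simp only [Polynomial.eval_mul, Polynomial.eval_C, Polynomial.eval_natCast, h4]
  rw [← mul_assoc ((-1 / 2 : ℝ) ^ k), h2, ← mul_assoc (2 ^ k : ℝ), ← mul_assoc,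
    one_div, inv_mul_cancel₀ (mul_ne_zero h3 hk), one_mul]
  simp [Polynomial.shiftedLegendre, Polynomial.eval_finsetSum, Polynomial.map_sum]

theorem aux_alt (m : ℕ) :
    ∑ j ∈ Finset.range (m + 2), (-1 : ℝ) ^ j * (m + 1).choose j * (m + j).choose m = 0 := by
  have h := fwdDiff_iter_eq_sum_shift (1 : ℕ) (fun x ↦ (x.choose m : ℤ)) (m + 1) m
  have h0 : (fwdDiff 1)^[m + 1] (fun x : ℕ ↦ (x.choose m : ℤ)) = 0 := by
    have := fwdDiff_iter_choose 0 m
    rw [Nat.add_zero] at this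
    rw [Function.iterate_succ_apply', this]
    funext x
    simp [fwdDiff]
  rw [h0] at h
  have h5 := congrArg (fun z : ℤ => (-1 : ℝ) ^ (m + 1) * (z : ℝ)) h
  simp only [Pi.zero_apply, Int.cast_zero, mul_zero, Int.cast_sum, Finset.mul_sum] at h5
  rw [h5]
  apply Finset.sum_congr rfl
  intro j hj
  have hj' : j ≤ m + 1 := by simp at hj; omega
  obtain ⟨d, hd⟩ := Nat.exists_eq_add_of_le hj'
  have e : m + 1 - j = d := by omega
  rw [e]
  have e2 : (-1 : ℝ) ^ (m + 1) * (-1) ^ d = (-1) ^ j := by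
    rw [hd, pow_add, mul_assoc, ← mul_pow]; norm_num
  push_cast [smul_eq_mul]
  rw [← e2]
  simp only [mul_one]
  ring

theorem aux_coef (m j : ℕ) (hj : j ≤ m + 1) :
    ((m + 1 : ℝ)) * (((m + 1).choose j : ℝ) * ((m + 1 + j).choose (m + 1) : ℝ)
      - (m.choose j : ℝ) * ((m + j).choose m : ℝ))
      = 2 * j * (((m + 1).choose j : ℝ) * ((m + j).choose m : ℝ)) := by
  have h1 : ((m + j + 1 : ℝ)) * ((m + j).choose m : ℝ)
      = ((m + 1 + j).choose (m + 1) : ℝ) * (m + 1) := by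
    have := Nat.add_one_mul_choose_eq (m + j) m
    rw [show m + 1 + j = m + j + 1 by ring]
    exact_mod_cast this
  have h2 : (m.choose j : ℝ) * (m + 1) = ((m + 1).choose j : ℝ) * (m + 1 - j) := by
    have := Nat.choose_mul_succ_eq m j
    have h := congrArg (Nat.cast : ℕ → ℝ) this
    push_cast [Nat.cast_sub hj] at h
    exact h
  linear_combination (-((m + 1).choose j : ℝ)) * h1 - ((m + j).choose m : ℝ) * h2

theorem aux_sum (k : ℕ) :
    ∑ j ∈ Finset.range k, (-1 : ℝ) ^ j * k.choose (j + 1) * (k + (j + 1)).choose k / (j + 1)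
      = 2 * ∑ n ∈ Finset.Icc 1 k, (1 / (n : ℝ)) := by
  induction k with
  | zero => simp
  | succ m ih =>
    rw [Finset.sum_Icc_succ_top (by omega), mul_add, ← ih]
    have hz : ∑ j ∈ Finset.range m,
        (-1 : ℝ) ^ j * m.choose (j + 1) * (m + (j + 1)).choose m / (j + 1)
        = ∑ j ∈ Finset.range (m + 1),
        (-1 : ℝ) ^ j * m.choose (j + 1) * (m + (j + 1)).choose m / (j + 1) := by
      rw [Finset.sum_range_succ]; simp
    rw [hz, ← sub_eq_iff_eq_add', ← Finset.sum_sub_distrib]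
    have ha := aux_alt m
    rw [Finset.sum_range_succ'] at ha
    simp only [pow_zero, Nat.choose_zero_right, Nat.cast_one, Nat.add_zero, Nat.choose_self,
      mul_one] at ha
    have hm : (m + 1 : ℝ) ≠ 0 := by positivity
    have hb : ∑ j ∈ Finset.range (m + 1), ((-1 : ℝ) ^ (j + 1) * (m + 1).choose (j + 1) *
        (m + (j + 1)).choose m) = -1 := by linarith
    have : (2 * (1 / ((m + 1 : ℕ) : ℝ))) = (-2 / (m + 1)) * (-1) := by push_cast; ring
    refine Eq.trans ?_ (this.trans (congrArg (fun z : ℝ => (-2 / (m + 1)) * z) hb.symm)).symm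
    simp only [Finset.mul_sum]
    apply Finset.sum_congr rfl
    intro j hj
    have hc := aux_coef m (j + 1) (by simp at hj; omega)
    have hj1 : (j + 1 : ℝ) ≠ 0 := by positivity
    push_cast at hc
    rw [pow_succ]
    field_simp
    linear_combination hc

/-- ∫_{−1}^{1} (1 − P_k(u))/(1−u) du = 2 Σ_{n=1}^{k} 1/n. -/
theorem legendre_harmonic_integral (k : ℕ) :
    ∫ u in (-1 : ℝ)..1, (1 - legendreP k u) / (1 - u)
      = 2 * ∑ n ∈ Finset.Icc 1 k, (1 / (n : ℝ)) := by
  rw [← aux_sum]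
  have hae : ∀ᵐ u : ℝ, u ≠ 1 := by
    rw [MeasureTheory.ae_iff]; simp
  have h1 : ∫ u in (-1 : ℝ)..1, (1 - legendreP k u) / (1 - u)
      = ∫ u in (-1 : ℝ)..1, (fun t : ℝ => ∑ j ∈ Finset.range k,
        (-1 : ℝ) ^ j * k.choose (j + 1) * (k + (j + 1)).choose k / 2 * t ^ j) (1 / 2 - u / 2) := by
    apply intervalIntegral.integral_congr_ae
    filter_upwards [hae] with u hu _
    have hu' : 1 - u ≠ 0 := sub_ne_zero.mpr (Ne.symm hu)
    rw [aux_legendre, Finset.sum_range_succ', div_eq_iff hu', Finset.sum_mul]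
    simp only [pow_zero, Nat.choose_zero_right, Nat.cast_one, Nat.add_zero, Nat.choose_self,
      mul_one]
    rw [sub_add_eq_sub_sub, sub_right_comm, sub_self, zero_sub, ← Finset.sum_neg_distrib]
    apply Finset.sum_congr rfl
    intro j _
    ring
  have h2 := intervalIntegral.integral_comp_sub_div (a := -1) (b := 1) (c := 2)
    (fun t : ℝ => ∑ j ∈ Finset.range k,
      (-1 : ℝ) ^ j * k.choose (j + 1) * (k + (j + 1)).choose k / 2 * t ^ j) two_ne_zero (1 / 2)
  refine h1.trans (h2.trans ?_)
  norm_num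
  rw [intervalIntegral.integral_finsetSum
    (fun i _ => Continuous.intervalIntegrable (by fun_prop) _ _), Finset.mul_sum]
  apply Finset.sum_congr rfl
  intro j _
  rw [intervalIntegral.integral_const_mul, integral_pow]
  simp
  ring
end
end

section
/- For every real m̃ > 0: lim_{N→∞} Σ_{l=0}^{⌊√N⌋} (2l+1)/(l(l+1) + N m̃²) = ln(1 + 1/m̃²), where the limit is over integers N → ∞. (This is the exact large-N evaluation of the coincident-point propagator N·⟨x|x| (□+m²)^{−1} |x|x⟩ in the regime m² = N m̃² of masses comparable to the noncommutativity scale.) -/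
open scoped BigOperators
open Filter

lemma aux_upper (A : ℝ) (hA : 0 < A) (K : ℕ) :
    ∑ l ∈ Finset.range (K + 1), (2 * (l : ℝ) + 1) / ((l : ℝ) * ((l : ℝ) + 1) + A)
      ≤ Real.log ((K : ℝ) * (K + 1) + A) - Real.log A + (K + 1) / A := by
  induction K with
  | zero => simp
  | succ K ih =>
    rw [Finset.sum_range_succ]
    push_cast
    have hv : 0 < (K : ℝ) * (K + 1) + A := by positivity
    have hu : 0 < ((K : ℝ) + 1) * (K + 1 + 1) + A := by positivity
    have h := Real.one_sub_inv_le_log_of_pos (div_pos hu hv)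
    rw [Real.log_div hu.ne' hv.ne', inv_div] at h
    have h1 : 1 / (((K : ℝ) + 1) * (K + 1 + 1) + A) ≤ 1 / A := by
      apply one_div_le_one_div_of_le hA
      have : 0 ≤ ((K : ℝ) + 1) * (K + 1 + 1) := by positivity
      linarith
    have h2 : (2 * ((K : ℝ) + 1) + 1) / (((K : ℝ) + 1) * (K + 1 + 1) + A)
        = 1 - ((K : ℝ) * (K + 1) + A) / (((K : ℝ) + 1) * (K + 1 + 1) + A)
          + 1 / (((K : ℝ) + 1) * (K + 1 + 1) + A) := by
      field_simp
      ring
    have h3 : ((K : ℝ) + 1 + 1) / A = (K + 1) / A + 1 / A := by ring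
    linarith

lemma aux_lower (A : ℝ) (hA : 0 < A) (K : ℕ) :
    Real.log ((K : ℝ) * (K + 1) + A) - Real.log A - K / A ≤
    ∑ l ∈ Finset.range K, (2 * (l : ℝ) + 1) / ((l : ℝ) * ((l : ℝ) + 1) + A) := by
  induction K with
  | zero => simp
  | succ K ih =>
    rw [Finset.sum_range_succ]
    push_cast
    have hv : 0 < (K : ℝ) * (K + 1) + A := by positivity
    have hu : 0 < ((K : ℝ) + 1) * (K + 1 + 1) + A := by positivity
    have h := Real.log_le_sub_one_of_pos (div_pos hu hv)
    rw [Real.log_div hu.ne' hv.ne'] at h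
    have h1 : 1 / ((K : ℝ) * (K + 1) + A) ≤ 1 / A := by
      apply one_div_le_one_div_of_le hA
      have : 0 ≤ (K : ℝ) * (K + 1) := by positivity
      linarith
    have h2 : (2 * (K : ℝ) + 1) / ((K : ℝ) * (K + 1) + A)
        = (((K : ℝ) + 1) * (K + 1 + 1) + A) / ((K : ℝ) * (K + 1) + A) - 1
          - 1 / ((K : ℝ) * (K + 1) + A) := by
      field_simp
      ring
    have h3 : ((K : ℝ) + 1) / A = K / A + 1 / A := by ring
    linarith

/-- for m̃ > 0,
    lim_{N→∞} Σ_{l=0}^{⌊√N⌋} (2l+1)/(l(l+1) + N m̃²) = ln(1 + 1/m̃²). -/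
theorem propagator_coincident_large_mass (mt : ℝ) (hmt : 0 < mt) :
    Tendsto
      (fun N : ℕ => ∑ l ∈ Finset.range (⌊Real.sqrt N⌋₊ + 1),
        (2 * (l : ℝ) + 1) / ((l : ℝ) * ((l : ℝ) + 1) + (N : ℝ) * mt ^ 2))
      atTop (nhds (Real.log (1 + 1 / mt ^ 2))) := by
  have hsq : Tendsto (fun N : ℕ => Real.sqrt N) atTop atTop :=
    Real.tendsto_sqrt_atTop.comp tendsto_natCast_atTop_atTop
  have hr : Tendsto (fun N : ℕ => (⌊Real.sqrt N⌋₊ : ℝ) / Real.sqrt N) atTop (nhds 1) :=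
    (tendsto_nat_floor_div_atTop (R := ℝ)).comp hsq
  have hs : Tendsto (fun N : ℕ => (Real.sqrt N)⁻¹) atTop (nhds 0) :=
    tendsto_inv_atTop_zero.comp hsq
  have hm : 0 < mt ^ 2 := by positivity
  have herr := ((hr.add hs).mul hs).div_const (mt ^ 2)
  have hne : (1 : ℝ) * (1 + 0) / mt ^ 2 + 1 ≠ 0 := by positivity
  have hne2 : ((1 : ℝ) + 0) * (1 + (0 + 0)) / mt ^ 2 + 1 ≠ 0 := by positivity
  have hU := ((((hr.mul (hr.add hs)).div_const (mt ^ 2)).add_const 1).log hne).add herr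
  have hL := (((((hr.add hs).mul (hr.add (hs.add hs))).div_const (mt ^ 2)).add_const 1).log hne2).sub
    herr
  have e1 : Real.log (1 * (1 + 0) / mt ^ 2 + 1) + (1 + 0) * 0 / mt ^ 2
      = Real.log (1 + 1 / mt ^ 2) := by simp [add_comm]
  have e2 : Real.log ((1 + 0) * (1 + (0 + 0)) / mt ^ 2 + 1) - (1 + 0) * 0 / mt ^ 2
      = Real.log (1 + 1 / mt ^ 2) := by simp [add_comm]
  rw [e1] at hU
  rw [e2] at hL
  refine tendsto_of_tendsto_of_tendsto_of_le_of_le' hL hU ?_ ?_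
  all_goals
    filter_upwards [eventually_gt_atTop 0] with N hN
    have hN' : (0 : ℝ) < N := by exact_mod_cast hN
    have hA : (0 : ℝ) < N * mt ^ 2 := by positivity
    have hq : 0 < Real.sqrt N := Real.sqrt_pos.2 hN'
    have hqq : (N : ℝ) = Real.sqrt N ^ 2 := (Real.sq_sqrt hN'.le).symm
    generalize hk : ⌊Real.sqrt N⌋₊ = k
    generalize Real.sqrt N = q at hq hqq
  · refine le_trans (le_of_eq ?_) (aux_lower _ hA (k + 1))
    rw [← Real.log_div (by positivity) hA.ne']
    rw [hqq]
    push_cast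
    congr 1
    · congr 1
      field_simp
      ring
    · field_simp
  · refine le_trans (aux_upper _ hA k) (le_of_eq ?_)
    rw [← Real.log_div (by positivity) hA.ne']
    rw [hqq]
    congr 1
    · congr 1
      field_simp
    · field_simp
end
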